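/- For each integer b ≥ 2 there exists λ_b < 1 such that for every λ ∈ (λ_b, 1) the graph {(x, W_{λ,b}(x)) : x ∈ [0,1)} of the classical Weierstrass function W_{λ,b} has Hausdorff dimension 2 + log λ / log b. -/

import Mathlib

open MeasureTheory Real Set Filter

noncomputable section

/-- The classical Weierstrass function `W_{λ,b}(x) = Σ_{n≥0} λ^n cos(2π b^n x)`. -/
def Wc (b : ℕ) (l : ℝ) (x : ℝ) : ℝ := ∑' n : ℕ, l ^ n * Real.cos (2 * π * (b : ℝ) ^ n * x)

/-!
The upper bound holds because `W` is Hölder continuous of exponent `- log λ / log b`.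

For the lower bound, lift Lebesgue measure to the graph and apply the mass distribution principle:
for almost every `x` the set of `t` with `|t| ≤ b ^ (-n)` and `|W (x + t) - W x| ≤ b ^ (-n)` has to
have measure at most of the order `b ^ (-n d)` for each `d < D = 2 + log λ / log b`. At `z / b ^ q`
the function is `λ ^ q` times the sum of `W z` and a trigonometric polynomial in `z` with low
frequencies, which is affine up to second order with a slope depending on the inverse branch of
`x ↦ b ^ q x` used to reach `z`. If the same increment `s` of size about `b ^ (-k)` nearly preserves
the height along two branches, then their slopes agree up to `b ^ (-k)`. For `λ` close to one the
leading terms dominate the series of the slope differences and of their derivatives, so branches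
with different last digits are transversal and slopes rarely agree. Hence the mass of close pairs at
scale `q + k` is controlled by that at scale `k`, which improves a bound with exponent `s` to one
with exponent `1 + (1 - 1 / D) s`. The fixed point of this improvement is `D`.
-/

section Calculus

lemma abs_sub_sub_deriv_mul_le {f f' : ℝ → ℝ} {L : ℝ} (hf : ∀ x, HasDerivAt f (f' x) x)
    (hL : ∀ x y, |f' x - f' y| ≤ L * |x - y|) (x y : ℝ) :
    |f y - f x - f' x * (y - x)| ≤ L * (y - x) ^ 2 := by
  have hL0 : 0 ≤ L := by simpa using (abs_nonneg _).trans (hL 1 0)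
  have hderiv : ∀ u ∈ Metric.closedBall x |y - x|,
      HasDerivWithinAt (fun u => f u - f' x * u) (f' u - f' x)
        (Metric.closedBall x |y - x|) u := fun u _ =>
    ((hf u).sub (by simpa using (hasDerivAt_id u).const_mul (f' x))).hasDerivWithinAt
  have hbound : ∀ u ∈ Metric.closedBall x |y - x|, ‖f' u - f' x‖ ≤ L * |y - x| := fun u hu =>
    (hL u x).trans (mul_le_mul_of_nonneg_left hu hL0)
  have hmvt := (convex_closedBall x |y - x|).norm_image_sub_le_of_norm_hasDerivWithin_le
    hderiv hbound (Metric.mem_closedBall_self (abs_nonneg _))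
    (y := y) (by rw [Metric.mem_closedBall, Real.dist_eq])
  calc |f y - f x - f' x * (y - x)| = ‖f y - f' x * y - (f x - f' x * x)‖ := by
        rw [Real.norm_eq_abs]; ring_nf
    _ ≤ L * |y - x| * ‖y - x‖ := hmvt
    _ = L * (y - x) ^ 2 := by rw [Real.norm_eq_abs, mul_assoc, ← sq, sq_abs]

lemma abs_sub_le_of_abs_deriv_le {f f' : ℝ → ℝ} {M : ℝ} (hf : ∀ x, HasDerivAt f (f' x) x)
    (hM : ∀ x, |f' x| ≤ M) (x y : ℝ) : |f x - f y| ≤ M * |x - y| :=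
  convex_univ.norm_image_sub_le_of_norm_hasDerivWithin_le (fun u _ => (hf u).hasDerivWithinAt)
    (fun u _ => hM u) (mem_univ y) (mem_univ x)

lemma abs_sub_le_of_abs_le_of_le_abs_deriv {f f' : ℝ → ℝ} {L δ ρ x y : ℝ}
    (hf : ∀ x, HasDerivAt f (f' x) x) (hL : ∀ x y, |f' x - f' y| ≤ L * |x - y|) (hδ : 0 < δ)
    (hx : |f x| ≤ ρ) (hy : |f y| ≤ ρ) (hderiv : δ ≤ |f' x|) (hxy : L * |x - y| ≤ δ / 2) :
    |x - y| ≤ 4 * ρ / δ := by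
  have htaylor := abs_sub_sub_deriv_mul_le hf hL x y
  have hlower : δ * |x - y| ≤ |f' x * (y - x)| := by
    rw [abs_mul, abs_sub_comm y x]; gcongr
  have hupper : |f' x * (y - x)| ≤ 2 * ρ + δ / 2 * |x - y| := by
    have hquad : L * (y - x) ^ 2 ≤ δ / 2 * |x - y| := by
      rw [← sq_abs (y - x), abs_sub_comm y x, sq, ← mul_assoc]; gcongr
    have htri := abs_sub (f y - f x) (f y - f x - f' x * (y - x))
    rw [sub_sub_cancel] at htri
    linarith [abs_sub (f y) (f x)]
  rw [le_div_iff₀ hδ]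
  linarith

lemma abs_sum_range_inv_pow_succ_mul_le {x M : ℝ} (hx : 1 < x) (hM : 0 ≤ M) {d : ℕ → ℝ}
    (hd : ∀ j, |d j| ≤ M) (q : ℕ) :
    |∑ j ∈ Finset.range q, x⁻¹ ^ (j + 1) * d j| ≤ M * (x - 1)⁻¹ := by
  have hx0 : 0 < x := by linarith
  calc |∑ j ∈ Finset.range q, x⁻¹ ^ (j + 1) * d j|
      ≤ ∑ j ∈ Finset.range q, M * (x⁻¹ * x⁻¹ ^ j) := by
        refine (Finset.abs_sum_le_sum_abs _ _).trans (Finset.sum_le_sum fun j _ => ?_)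
        rw [abs_mul, abs_of_nonneg (by positivity), pow_succ', mul_comm M]
        exact mul_le_mul_of_nonneg_left (hd j) (by positivity)
    _ ≤ M * (x⁻¹ * (1 - x⁻¹)⁻¹) := by
        rw [← Finset.mul_sum, ← Finset.mul_sum,
          ← tsum_geometric_of_lt_one (inv_nonneg.2 hx0.le) (inv_lt_one_of_one_lt₀ hx)]
        gcongr
        exact (summable_geometric_of_lt_one (inv_nonneg.2 hx0.le)
          (inv_lt_one_of_one_lt₀ hx)).sum_le_tsum _ fun j _ => by positivity
    _ = M * (x - 1)⁻¹ := by
        rw [← mul_inv, mul_sub, mul_one, mul_inv_cancel₀ hx0.ne']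

lemma exists_inv_pow_succ_lt_and_le_inv_pow {B x : ℝ} (hB : 1 < B) (hx : 0 < x) {N : ℕ}
    (hxN : x ≤ (B ^ N)⁻¹) : ∃ n ≥ N, (B ^ (n + 1))⁻¹ < x ∧ x ≤ (B ^ n)⁻¹ := by
  have hB0 : 0 < B := by linarith
  have hx1 : x ≤ 1 := hxN.trans (inv_le_one_of_one_le₀ (one_le_pow₀ hB.le))
  obtain ⟨n, hn, hn'⟩ :=
    exists_nat_pow_near_of_lt_one hx hx1 (inv_pos.2 hB0) (inv_lt_one_of_one_lt₀ hB)
  rw [inv_pow] at hn hn'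
  refine ⟨n, ?_, hn, hn'⟩
  have hlt : B ^ N < B ^ (n + 1) :=
    (inv_lt_inv₀ (by positivity) (by positivity)).1 (hn.trans_le hxN)
  exact Nat.lt_succ_iff.1 ((pow_lt_pow_iff_right₀ hB).1 hlt)

end Calculus

section SmallSets

lemma volume_le_ofReal_of_diam_le {S : Set ℝ} {d : ℝ} (hS : ∀ x ∈ S, ∀ y ∈ S, |x - y| ≤ d) :
    volume S ≤ ENNReal.ofReal d :=
  (Real.volume_le_diam S).trans <| Metric.ediam_le fun x hx y hy => by
    rw [edist_dist, Real.dist_eq]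
    exact ENNReal.ofReal_le_ofReal (hS x hx y hy)

lemma volume_le_of_locally_diam_le {S : Set ℝ} {η d : ℝ} (hη : 0 < η) (m : ℕ)
    (hS : S ⊆ Ico 0 (m * η)) (hd : ∀ x ∈ S, ∀ y ∈ S, |x - y| ≤ η → |x - y| ≤ d) :
    volume S ≤ m * ENNReal.ofReal d := by
  set cell : ℕ → Set ℝ := fun j => {x ∈ S | j * η ≤ x ∧ x ≤ (j + 1) * η}
  have hcover : S ⊆ ⋃ j ∈ Finset.range m, cell j := fun x hx => by
    obtain ⟨hx0, hxm⟩ := hS hx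
    refine mem_biUnion (x := ⌊x / η⌋₊) ?_ ⟨hx, ?_, ?_⟩
    · exact Finset.mem_range.2 ((Nat.floor_lt (by positivity)).2 ((div_lt_iff₀ hη).2 hxm))
    · exact (le_div_iff₀ hη).1 (Nat.floor_le (by positivity))
    · exact (div_le_iff₀ hη).1 (Nat.lt_floor_add_one _).le
  have hvol : ∀ j ∈ Finset.range m, volume (cell j) ≤ ENNReal.ofReal d := fun j _ =>
    volume_le_ofReal_of_diam_le fun x ⟨hxS, hx, hx'⟩ y ⟨hyS, hy, hy'⟩ =>
      hd x hxS y hyS (abs_le.2 ⟨by linarith, by linarith⟩)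
  calc volume S ≤ ∑ j ∈ Finset.range m, volume (cell j) :=
        (measure_mono hcover).trans (measure_biUnion_finset_le _ _)
    _ ≤ m * ENNReal.ofReal d := by
        simpa using Finset.sum_le_card_nsmul _ _ _ hvol

/- On each interval of length `1 / (P * N)` the function is nearly affine, so that the sublevel set
is short there. -/
lemma volume_abs_mul_le_le {f f' : ℝ → ℝ} {L δ ρ : ℝ} {P N : ℕ}
    (hf : ∀ x, HasDerivAt f (f' x) x) (hL : ∀ x y, |f' x - f' y| ≤ L * |x - y|) (hδ : 0 < δ)
    (htr : ∀ x, δ ≤ |f x| ∨ δ ≤ |f' x|) (hP0 : 0 < P) (hP : 2 * L ≤ δ * P) (hN : 0 < N)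
    (hρ : ρ < δ) :
    volume {x ∈ Ico (0 : ℝ) 1 | |f (N * x)| ≤ ρ} ≤ ENNReal.ofReal (4 * P / δ * ρ) := by
  have hP0' : (0 : ℝ) < P := by exact_mod_cast hP0
  have hN' : (0 : ℝ) < N := by exact_mod_cast hN
  have hlocal : ∀ x ∈ {x ∈ Ico (0 : ℝ) 1 | |f (N * x)| ≤ ρ},
      ∀ y ∈ {x ∈ Ico (0 : ℝ) 1 | |f (N * x)| ≤ ρ}, |x - y| ≤ ((P : ℝ) * N)⁻¹ →
        |x - y| ≤ 4 * ρ / δ / N := fun x ⟨_, hx⟩ y ⟨_, hy⟩ hxy => by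
    have hscale : |N * x - N * y| = N * |x - y| := by rw [← mul_sub, abs_mul, Nat.abs_cast]
    have hclose : N * |x - y| ≤ (P : ℝ)⁻¹ := by
      calc N * |x - y| ≤ N * ((P : ℝ) * N)⁻¹ := by gcongr
        _ = (P : ℝ)⁻¹ := by field_simp
    have hL0 : 0 ≤ L := by simpa using (abs_nonneg _).trans (hL 1 0)
    rw [le_div_iff₀' hN', ← hscale]
    refine abs_sub_le_of_abs_le_of_le_abs_deriv hf hL hδ hx hy
      ((htr _).resolve_left fun h => by linarith) ?_
    rw [hscale]
    calc L * (N * |x - y|) ≤ L * (P : ℝ)⁻¹ := by gcongr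
      _ ≤ δ / 2 := by rw [← div_eq_mul_inv, div_le_iff₀ hP0']; linarith
  refine (volume_le_of_locally_diam_le (by positivity : 0 < ((P : ℝ) * N)⁻¹) (P * N)
    (fun x hx => ?_) hlocal).trans_eq ?_
  · rw [Nat.cast_mul, mul_inv_cancel₀ (by positivity)]; exact hx.1
  · rw [← ENNReal.ofReal_natCast, ← ENNReal.ofReal_mul (by positivity)]
    congr 1
    push_cast
    field_simp

lemma sum_measure_le_mul_measure {α ι : Type*} [MeasurableSpace α] {μ : Measure α}
    {I : Finset ι} {T : ι → Set α} {U : Set α} {K : ENNReal} (hT : ∀ i ∈ I, MeasurableSet (T i))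
    (hTU : ∀ i ∈ I, T i ⊆ U) (hK : ∀ s ∈ U, ∑ i ∈ I, (T i).indicator 1 s ≤ K) :
    ∑ i ∈ I, μ (T i) ≤ K * μ U := by
  calc ∑ i ∈ I, μ (T i) = ∑ i ∈ I, ∫⁻ s in U, (T i).indicator 1 s ∂μ :=
        Finset.sum_congr rfl fun i hi => by
          rw [lintegral_indicator_one (hT i hi), Measure.restrict_apply (hT i hi),
            inter_eq_self_of_subset_left (hTU i hi)]
    _ = ∫⁻ s in U, ∑ i ∈ I, (T i).indicator 1 s ∂μ :=
        (lintegral_finsetSum' _ fun i hi =>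
          (measurable_one.indicator (hT i hi)).aemeasurable).symm
    _ ≤ K * μ U := by
        refine (setLIntegral_mono measurable_const hK).trans_eq ?_
        rw [setLIntegral_const]

end SmallSets

section Unfolding

lemma setLIntegral_eq_ofReal_mul_setLIntegral_div {S : Set ℝ} (hS : MeasurableSet S)
    (F : ℝ → ENNReal) {c : ℝ} (hc : 0 < c) :
    ∫⁻ x in S, F x = ENNReal.ofReal c⁻¹ * ∫⁻ x in (· / c) ⁻¹' S, F (x / c) := by
  have hc' : c⁻¹ ≠ 0 := (inv_pos.2 hc).ne'
  have hmap := lintegral_map_equiv (μ := volume) (S.indicator F)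
    (Homeomorph.mulLeft₀ c⁻¹ hc').toMeasurableEquiv
  simp only [Homeomorph.toMeasurableEquiv_coe, Homeomorph.coe_mulLeft₀, ← div_eq_inv_mul] at hmap
  rw [← lintegral_indicator hS, ← lintegral_indicator (hS.preimage (by fun_prop))]
  conv_lhs => rw [← Real.smul_map_volume_mul_left hc']
  rw [lintegral_smul_measure, abs_of_pos (inv_pos.2 hc), smul_eq_mul]
  simp only [← div_eq_inv_mul, hmap]
  rfl

lemma setLIntegral_Ico_natCast_eq_sum {F : ℝ → ENNReal} (hF : Measurable F) (N : ℕ) :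
    ∫⁻ x in Ico (0 : ℝ) N, F x = ∫⁻ u in Ico (0 : ℝ) 1, ∑ a ∈ Finset.range N, F (u + a) := by
  rw [lintegral_finsetSum _ fun a _ => by fun_prop]
  induction N with
  | zero => simp
  | succ N ih =>
    have hshift : ∫⁻ u in Ico (0 : ℝ) 1, F (u + N) = ∫⁻ x in Ico (N : ℝ) (N + 1 : ℕ), F x := by
      rw [← (measurePreserving_add_right volume (N : ℝ)).setLIntegral_comp_preimage
        measurableSet_Ico hF]
      simp
    rw [Finset.sum_range_succ, ← ih, hshift, ← lintegral_union measurableSet_Ico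
      (Ico_disjoint_Ico_same), Ico_union_Ico_eq_Ico (by positivity) (by simp)]

lemma setLIntegral_Ico_zero_one_eq_sum_branches {F : ℝ → ENNReal} (hF : Measurable F) {N : ℕ}
    (hN : 0 < N) : ∫⁻ x in Ico (0 : ℝ) 1, F x = ENNReal.ofReal (N : ℝ)⁻¹ *
      ∫⁻ u in Ico (0 : ℝ) 1, ∑ a ∈ Finset.range N, F ((u + a) / N) := by
  have hN' : (0 : ℝ) < N := by exact_mod_cast hN
  have hpre : (· / (N : ℝ)) ⁻¹' Ico 0 1 = Ico 0 (N : ℝ) := by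
    ext x
    simp only [mem_preimage, mem_Ico, div_lt_one hN', le_div_iff₀ hN', zero_mul]
  rw [setLIntegral_eq_ofReal_mul_setLIntegral_div measurableSet_Ico F hN', hpre,
    setLIntegral_Ico_natCast_eq_sum (F := fun x => F (x / N)) (by fun_prop)]

lemma setLIntegral_comp_fract_natCast_mul {F : ℝ → ENNReal} (hF : Measurable F) {N : ℕ}
    (hN : 0 < N) :
    ∫⁻ x in Ico (0 : ℝ) 1, F (Int.fract (N * x)) = ∫⁻ x in Ico (0 : ℝ) 1, F x := by
  have hN' : (N : ℝ) ≠ 0 := by exact_mod_cast hN.ne'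
  have hbranch : ∀ u ∈ Ico (0 : ℝ) 1,
      ∑ a ∈ Finset.range N, F (Int.fract (N * ((u + a) / N))) = N * F u := fun u hu => by
    simp [mul_div_cancel₀ _ hN', Int.fract_eq_self.2 hu]
  rw [setLIntegral_Ico_zero_one_eq_sum_branches
      (F := fun x => F (Int.fract (N * x))) (by fun_prop) hN,
    setLIntegral_congr_fun measurableSet_Ico hbranch, lintegral_const_mul _ hF, ← mul_assoc,
    ENNReal.ofReal_inv_of_pos (by positivity), ENNReal.ofReal_natCast,
    ENNReal.inv_mul_cancel (by exact_mod_cast hN.ne') (ENNReal.natCast_ne_top N), one_mul]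

lemma volume_fract_natCast_mul_notMem {H : Set ℝ} (hH : MeasurableSet H) {N : ℕ} (hN : 0 < N) :
    volume {x ∈ Ico (0 : ℝ) 1 | Int.fract (N * x) ∉ H} = volume (Ico (0 : ℝ) 1 \ H) := by
  have hfract := setLIntegral_comp_fract_natCast_mul (measurable_one.indicator hH.compl) hN
  have hpre : MeasurableSet ((fun x : ℝ => Int.fract (N * x)) ⁻¹' Hᶜ) :=
    hH.compl.preimage (by fun_prop)
  rw [lintegral_indicator_one hH.compl, Measure.restrict_apply hH.compl] at hfract
  change ∫⁻ x in Ico (0 : ℝ) 1,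
    ((fun x : ℝ => Int.fract (N * x)) ⁻¹' Hᶜ).indicator 1 x = _ at hfract
  rw [lintegral_indicator_one hpre, Measure.restrict_apply hpre, inter_comm,
    inter_comm Hᶜ] at hfract
  exact hfract

end Unfolding

section HausdorffDimension

lemma measure_le_ofReal_mul_ediam_rpow {X : Type*} [PseudoMetricSpace X] [MeasurableSpace X]
    {μ : Measure X} {x : X} {A r₀ d : ℝ} (hA : 0 ≤ A) (hd : 0 ≤ d)
    (h : ∀ r, 0 < r → r ≤ r₀ → μ (Metric.closedBall x r) ≤ ENNReal.ofReal (A * r ^ d))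
    {s : Set X} (hx : x ∈ s) (hs : Metric.ediam s < ENNReal.ofReal r₀) :
    μ s ≤ ENNReal.ofReal A * Metric.ediam s ^ d := by
  have hfin : Metric.ediam s ≠ ⊤ := (hs.trans ENNReal.ofReal_lt_top).ne
  have hδ : (Metric.diam s) < r₀ := (ENNReal.lt_ofReal_iff_toReal_lt hfin).1 hs
  have hball : ∀ r > Metric.diam s, r ≤ r₀ → μ s ≤ ENNReal.ofReal (A * r ^ d) := fun r hr hr₀ =>
    (measure_mono fun y hy => (Metric.dist_le_diam_of_mem' hfin hy hx).trans hr.le).trans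
      (h r (Metric.diam_nonneg.trans_lt hr) hr₀)
  have hlim : Tendsto (fun r => ENNReal.ofReal (A * r ^ d)) (nhdsWithin (Metric.diam s)
      (Ioi (Metric.diam s))) (nhds (ENNReal.ofReal (A * Metric.diam s ^ d))) :=
    ((ENNReal.continuous_ofReal.comp (continuous_const.mul
      (Real.continuous_rpow_const hd))).tendsto _).mono_left nhdsWithin_le_nhds
  calc μ s ≤ ENNReal.ofReal (A * Metric.diam s ^ d) := by
        refine ge_of_tendsto hlim ?_
        filter_upwards [Ioc_mem_nhdsGT hδ] with r hr using hball r hr.1 hr.2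
    _ = ENNReal.ofReal A * Metric.ediam s ^ d := by
        rw [ENNReal.ofReal_mul hA, ← ENNReal.ofReal_rpow_of_nonneg Metric.diam_nonneg hd,
          Metric.diam, ENNReal.ofReal_toReal hfin]

lemma le_dimH_of_measure_closedBall_le {X : Type*} [MetricSpace X] [MeasurableSpace X]
    [BorelSpace X] {μ : Measure X} {E : Set X} {A r₀ : ℝ} {d : NNReal} (hA : 0 < A) (hr₀ : 0 < r₀)
    (hE : μ E ≠ 0) (h : ∀ x ∈ E, ∀ r, 0 < r → r ≤ r₀ →
      μ (Metric.closedBall x r) ≤ ENNReal.ofReal (A * r ^ (d : ℝ))) :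
    (d : ENNReal) ≤ dimH E := by
  have hA0 : ENNReal.ofReal A ≠ 0 := by simpa using hA
  have hmass : ∀ s : Set X, Metric.ediam s ≤ ENNReal.ofReal (r₀ / 2) →
      (μ.restrict E) s ≤ ENNReal.ofReal A * Metric.ediam s ^ (d : ℝ) := fun s hs => by
    refine (measure_mono subset_closure).trans ?_
    rw [Measure.restrict_apply isClosed_closure.measurableSet]
    rcases (closure s ∩ E).eq_empty_or_nonempty with hempty | ⟨x, hxs, hxE⟩
    · rw [hempty, measure_empty]; exact zero_le
    rw [← Metric.ediam_closure s] at hs ⊢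
    exact (measure_mono inter_subset_left).trans <|
      measure_le_ofReal_mul_ediam_rpow hA.le d.2 (h x hxE) hxs <| hs.trans_lt <|
        (ENNReal.ofReal_lt_ofReal_iff hr₀).2 (half_lt_self hr₀)
  have hle : (ENNReal.ofReal A)⁻¹ • μ.restrict E ≤ Measure.hausdorffMeasure (d : ℝ) :=
    Measure.le_hausdorffMeasure _ _ (ENNReal.ofReal (r₀ / 2))
      (ENNReal.ofReal_pos.2 (half_pos hr₀)) fun s hs => by
        rw [Measure.smul_apply, smul_eq_mul]
        exact (ENNReal.inv_mul_le_iff hA0 ENNReal.ofReal_ne_top).2 (hmass s hs)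
  refine le_dimH_of_hausdorffMeasure_ne_zero fun hzero => ?_
  have hnull := hle E
  rw [hzero, Measure.smul_apply, smul_eq_mul, nonpos_iff_eq_zero, mul_eq_zero,
    Measure.restrict_apply_self] at hnull
  exact hnull.elim (ENNReal.inv_ne_zero.2 ENNReal.ofReal_ne_top) hE

lemma le_dimH_of_measure_closedBall_inv_pow_le {X : Type*} [MetricSpace X] [MeasurableSpace X]
    [BorelSpace X] {μ : Measure X} {E : Set X} {A B : ℝ} {d : NNReal} {N : ℕ} (hB : 1 < B)
    (hA : 0 < A) (hE : μ E ≠ 0) (h : ∀ x ∈ E, ∀ n ≥ N,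
      μ (Metric.closedBall x (B ^ n)⁻¹) ≤ ENNReal.ofReal (A * B ^ (-(n * d : ℝ)))) :
    (d : ENNReal) ≤ dimH E := by
  have hB0 : 0 < B := by linarith
  refine le_dimH_of_measure_closedBall_le (A := A * B ^ (d : ℝ)) (r₀ := (B ^ N)⁻¹)
    (by positivity) (by positivity) hE fun x hx r hr hrN => ?_
  obtain ⟨n, hnN, hnr, hrn⟩ := exists_inv_pow_succ_lt_and_le_inv_pow hB hr hrN
  refine (measure_mono (Metric.closedBall_subset_closedBall hrn)).trans <|
    (h x hx n hnN).trans <| ENNReal.ofReal_le_ofReal ?_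
  calc A * B ^ (-(n * d : ℝ)) = A * B ^ (d : ℝ) * (B ^ (n + 1))⁻¹ ^ (d : ℝ) := by
        rw [mul_assoc, ← rpow_natCast, ← rpow_neg hB0.le, ← rpow_mul hB0.le, ← rpow_add hB0]
        push_cast
        ring_nf
    _ ≤ A * B ^ (d : ℝ) * r ^ (d : ℝ) := by gcongr

lemma le_dimH_graph {f : ℝ → ℝ} (hf : Measurable f) {A B : ℝ} {d : NNReal} {N : ℕ} (hB : 1 < B)
    (hA : 0 < A) {S E : Set ℝ} (hE : volume E ≠ 0) (hES : E ⊆ S)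
    (h : ∀ x ∈ E, ∀ n ≥ N, volume {t | |t| ≤ (B ^ n)⁻¹ ∧ |f (x + t) - f x| ≤ (B ^ n)⁻¹} ≤
      ENNReal.ofReal (A * B ^ (-(n * d : ℝ)))) :
    (d : ENNReal) ≤ dimH ((fun x => (x, f x)) '' S) := by
  have hg : Measurable fun x => (x, f x) := measurable_id.prodMk hf
  refine le_trans ?_ (dimH_mono (image_mono hES))
  refine le_dimH_of_measure_closedBall_inv_pow_le (μ := volume.map fun x => (x, f x)) (N := N)
    hB hA (fun hnull => hE ?_) ?_
  · exact measure_mono_null (subset_preimage_image _ E)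
      (nonpos_iff_eq_zero.1 ((Measure.le_map_apply hg.aemeasurable _).trans_eq hnull))
  · rintro _ ⟨x, hx, rfl⟩ n hn
    refine le_trans (le_of_eq ?_) (h x hx n hn)
    rw [Measure.map_apply hg Metric.isClosed_closedBall.measurableSet, ← measure_preimage_add _ x]
    congr 1
    ext t
    simp [Prod.dist_eq, Real.dist_eq]

lemma exists_measure_forall_ge_notMem_ne_zero {α : Type*} [MeasurableSpace α] {μ : Measure α}
    {S : Set α} {bad : ℕ → Set α} (hS : μ S ≠ 0) (hbad : ∑' n, μ (bad n) ≠ ⊤) :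
    ∃ N, μ {x ∈ S | ∀ n ≥ N, x ∉ bad n} ≠ 0 := by
  by_contra! hnull
  refine hS (measure_mono_null (fun x hx => ?_) (measure_union_null
    (measure_iUnion_null hnull) (ae_iff.1 (ae_eventually_notMem hbad))))
  by_cases hev : ∀ᶠ n in atTop, x ∉ bad n
  · obtain ⟨N, hN⟩ := eventually_atTop.1 hev
    exact Or.inl (mem_iUnion.2 ⟨N, hx, hN⟩)
  · exact Or.inr hev

end HausdorffDimension

section HolderGraph

/-- The `j`-th square of side `1 / N` in the column over `[i / N, (i + 1) / N]`, counted upwards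
from height `f (i / N) - h`; these squares cover a graph whose oscillation over each column is at
most `h`. -/
def graphSquare (f : ℝ → ℝ) (h : ℝ) (N i j : ℕ) : Set (ℝ × ℝ) :=
  Icc (i / N : ℝ) (i / N + (N : ℝ)⁻¹) ×ˢ
    Icc (f (i / N) - h + j / N) (f (i / N) - h + j / N + (N : ℝ)⁻¹)

lemma ediam_graphSquare_le (f : ℝ → ℝ) (h : ℝ) (N i j : ℕ) :
    Metric.ediam (graphSquare f h N i j) ≤ ENNReal.ofReal (N : ℝ)⁻¹ :=
  Metric.ediam_le fun p hp q hq => by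
    rw [edist_dist, Prod.dist_eq]
    refine ENNReal.ofReal_le_ofReal (max_le ?_ ?_)
    · simpa using Real.dist_le_of_mem_Icc hp.1 hq.1
    · simpa using Real.dist_le_of_mem_Icc hp.2 hq.2

lemma exists_fin_mem_Icc_div {N m : ℕ} {y : ℝ} (hN : 0 < N) (hy : 0 ≤ y) (hym : y * N < m) :
    ∃ j : Fin m, y ∈ Icc (j / N : ℝ) (j / N + (N : ℝ)⁻¹) := by
  have hN' : (0 : ℝ) < N := by exact_mod_cast hN
  refine ⟨⟨⌊y * N⌋₊, (Nat.floor_lt (by positivity)).2 hym⟩, ?_, ?_⟩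
  · exact (div_le_iff₀ hN').2 (Nat.floor_le (by positivity))
  · rw [← one_div, ← add_div]
    exact (le_div_iff₀ hN').2 (Nat.lt_floor_add_one _).le

lemma graph_subset_iUnion_graphSquare {f : ℝ → ℝ} {h : ℝ} {N m : ℕ} (hN : 0 < N)
    (hosc : ∀ i < N, ∀ x ∈ Ico (0 : ℝ) 1, |x - i / N| ≤ (N : ℝ)⁻¹ → |f x - f (i / N)| ≤ h)
    (hm : 2 * h * N < m) :
    (fun x => (x, f x)) '' Ico (0 : ℝ) 1 ⊆ ⋃ p : Fin N × Fin m, graphSquare f h N p.1 p.2 := by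
  rintro _ ⟨x, hx, rfl⟩
  obtain ⟨i, hi⟩ := exists_fin_mem_Icc_div hN hx.1
    (by simpa using mul_lt_mul_of_pos_right hx.2 (by exact_mod_cast hN : (0 : ℝ) < N))
  have hfx := abs_le.1 (hosc i i.2 x hx (abs_le.2 ⟨by linarith [hi.1, hi.2], by linarith [hi.2]⟩))
  have hheight : (f x - (f (i / N) - h)) * N < m :=
    (mul_le_mul_of_nonneg_right (by linarith) (Nat.cast_nonneg N)).trans_lt hm
  obtain ⟨j, hj⟩ := exists_fin_mem_Icc_div hN (by linarith) hheight
  exact mem_iUnion.2 ⟨(i, j), hi, by linarith [hj.1], by linarith [hj.2]⟩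

lemma dimH_le_of_finite_covers {X : Type*} [EMetricSpace X] {E : Set X} {d : NNReal} {C : ℝ}
    {ι : ℕ → Type*} [∀ n, Fintype (ι n)] {r : ℕ → ℝ} (hr0 : ∀ n, 0 ≤ r n)
    (hr : Tendsto r atTop (nhds 0)) {T : ∀ n, ι n → Set X} (hcover : ∀ n, E ⊆ ⋃ i, T n i)
    (hdiam : ∀ n i, Metric.ediam (T n i) ≤ ENNReal.ofReal (r n))
    (hcard : ∀ n, Fintype.card (ι n) * r n ^ (d : ℝ) ≤ C) : dimH E ≤ d := by
  borelize X
  have hlim : Tendsto (fun n => ENNReal.ofReal (r n)) atTop (nhds 0) := by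
    simpa using ENNReal.tendsto_ofReal hr
  have hsum : ∀ n, ∑ i, Metric.ediam (T n i) ^ (d : ℝ) ≤ ENNReal.ofReal C := fun n => by
    refine (Finset.sum_le_card_nsmul _ _ (ENNReal.ofReal (r n ^ (d : ℝ))) fun i _ => ?_).trans ?_
    · rw [← ENNReal.ofReal_rpow_of_nonneg (hr0 n) d.coe_nonneg]
      exact ENNReal.rpow_le_rpow (hdiam n i) d.2
    · rw [nsmul_eq_mul, Finset.card_univ, ← ENNReal.ofReal_natCast,
        ← ENNReal.ofReal_mul (Nat.cast_nonneg _)]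
      exact ENNReal.ofReal_le_ofReal (hcard n)
  refine dimH_le_of_hausdorffMeasure_ne_top
    (ne_top_of_le_ne_top (ENNReal.ofReal_ne_top (r := C)) ?_)
  refine (Measure.hausdorffMeasure_le_liminf_sum _ _ _ hlim T (Eventually.of_forall hdiam)
    (Eventually.of_forall hcover)).trans ?_
  exact (liminf_le_liminf (Eventually.of_forall hsum)).trans_eq (liminf_const _)

lemma mul_floor_succ_mul_inv_rpow_le {N : ℕ} (hN : 0 < N) {C α : ℝ} (hC : 0 ≤ C) (hα : α ≤ 1) :
    (N * (⌊2 * (C * (N : ℝ)⁻¹ ^ α) * N⌋₊ + 1 : ℕ) : ℝ) * (N : ℝ)⁻¹ ^ (2 - α) ≤ 2 * C + 1 := by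
  have hN' : (1 : ℝ) ≤ N := by exact_mod_cast hN
  set u : ℝ := (N : ℝ)⁻¹
  have hu0 : 0 < u := by positivity
  have hNu : N * u = 1 := mul_inv_cancel₀ (by positivity)
  have hfloor : ((⌊2 * (C * u ^ α) * N⌋₊ + 1 : ℕ) : ℝ) ≤ 2 * (C * u ^ α) * N + 1 := by
    push_cast
    gcongr
    exact Nat.floor_le (by positivity)
  have hu1 : u ^ (1 - α) ≤ 1 :=
    rpow_le_one hu0.le (inv_le_one_of_one_le₀ hN') (by linarith)
  have hsq : u ^ α * u ^ (2 - α) = u ^ 2 := by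
    rw [← rpow_add hu0, add_sub_cancel, rpow_ofNat]
  have hone : u ^ (2 - α) = u * u ^ (1 - α) := by
    rw [← rpow_one_add' hu0.le (by linarith)]; ring_nf
  calc N * ((⌊2 * (C * u ^ α) * N⌋₊ + 1 : ℕ) : ℝ) * u ^ (2 - α)
      ≤ N * (2 * (C * u ^ α) * N + 1) * u ^ (2 - α) := by gcongr
    _ = 2 * C * N ^ 2 * (u ^ α * u ^ (2 - α)) + N * u ^ (2 - α) := by ring
    _ = 2 * C * (N * u) ^ 2 + N * u * u ^ (1 - α) := by rw [hsq, hone]; ring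
    _ ≤ 2 * C + 1 := by rw [hNu]; linarith

/- The graph is covered by about `N ^ (2 - α)` squares of side `1 / N`. -/
lemma dimH_graph_le_of_holderOnWith {C α : NNReal} (hα : α ≤ 1) {f : ℝ → ℝ}
    (hf : HolderOnWith C α f (Ico 0 1)) :
    dimH ((fun x => (x, f x)) '' Ico (0 : ℝ) 1) ≤ (2 - α : NNReal) := by
  set h : ℕ → ℝ := fun n => C * ((n + 1 : ℕ) : ℝ)⁻¹ ^ (α : ℝ)
  set m : ℕ → ℕ := fun n => ⌊2 * h n * (n + 1 : ℕ)⌋₊ + 1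
  refine dimH_le_of_finite_covers (r := fun n => ((n + 1 : ℕ) : ℝ)⁻¹) (C := 2 * C + 1)
    (ι := fun n => Fin (n + 1) × Fin (m n))
    (T := fun n p => graphSquare f (h n) (n + 1) p.1 p.2) (fun n => by positivity)
    (tendsto_inv_atTop_nhds_zero_nat.comp (tendsto_add_atTop_nat 1)) (fun n => ?_)
    (fun n p => ediam_graphSquare_le ..) fun n => ?_
  · refine graph_subset_iUnion_graphSquare n.succ_pos (fun i hi x hx hxi => ?_) ?_
    · rw [← Real.dist_eq] at hxi ⊢
      exact hf.dist_le_of_le hx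
        ⟨by positivity, (div_lt_one (by positivity)).2 (by exact_mod_cast hi)⟩ hxi
    · push_cast [m]; exact Nat.lt_floor_add_one _
  · rw [Fintype.card_prod, Fintype.card_fin, Fintype.card_fin, Nat.cast_mul,
      NNReal.coe_sub (hα.trans one_le_two), NNReal.coe_ofNat]
    exact mul_floor_succ_mul_inv_rpow_le n.succ_pos C.2 (by exact_mod_cast hα)

end HolderGraph

section Weierstrass

variable {b : ℕ} {l : ℝ}

lemma pos_of_one_lt_natCast_mul (hbl : 1 < b * l) : 0 < l :=
  pos_of_mul_pos_right (one_pos.trans hbl) b.cast_nonneg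

lemma natCast_pos_of_one_lt_natCast_mul (hbl : 1 < b * l) : (0 : ℝ) < b :=
  pos_of_mul_pos_left (one_pos.trans hbl) (pos_of_one_lt_natCast_mul hbl).le

lemma one_lt_natCast_of_one_lt_natCast_mul (hl1 : l < 1) (hbl : 1 < b * l) : (1 : ℝ) < b := by
  nlinarith [natCast_pos_of_one_lt_natCast_mul hbl]

lemma norm_pow_mul_cos_le (hl0 : 0 ≤ l) (n : ℕ) (y : ℝ) : ‖l ^ n * cos y‖ ≤ l ^ n := by
  rw [norm_mul, norm_pow, Real.norm_of_nonneg hl0]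
  exact mul_le_of_le_one_right (pow_nonneg hl0 n) (abs_cos_le_one y)

lemma summable_Wc (hl0 : 0 ≤ l) (hl1 : l < 1) (x : ℝ) :
    Summable fun n : ℕ => l ^ n * cos (2 * π * (b : ℝ) ^ n * x) :=
  .of_norm_bounded (summable_geometric_of_lt_one hl0 hl1) fun n => norm_pow_mul_cos_le hl0 n _

lemma abs_Wc_le (hl0 : 0 ≤ l) (hl1 : l < 1) (x : ℝ) : |Wc b l x| ≤ (1 - l)⁻¹ := by
  rw [← tsum_geometric_of_lt_one hl0 hl1]
  exact tsum_of_norm_bounded (summable_geometric_of_lt_one hl0 hl1).hasSum fun n =>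
    norm_pow_mul_cos_le hl0 n _

lemma abs_Wc_sub_le (hl0 : 0 ≤ l) (hl1 : l < 1) (x y : ℝ) :
    |Wc b l x - Wc b l y| ≤ 2 * (1 - l)⁻¹ := by
  linarith [abs_sub (Wc b l x) (Wc b l y), abs_Wc_le (b := b) hl0 hl1 x,
    abs_Wc_le (b := b) hl0 hl1 y]

lemma continuous_Wc (hl0 : 0 ≤ l) (hl1 : l < 1) : Continuous (Wc b l) :=
  continuous_tsum (fun n => by fun_prop) (summable_geometric_of_lt_one hl0 hl1) fun n _ =>
    norm_pow_mul_cos_le hl0 n _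

lemma Wc_add_intCast (x : ℝ) (a : ℤ) : Wc b l (x + a) = Wc b l x := by
  refine tsum_congr fun n => ?_
  have hperiod : 2 * π * (b : ℝ) ^ n * (x + a) =
      2 * π * (b : ℝ) ^ n * x + (((b : ℤ) ^ n * a : ℤ) : ℝ) * (2 * π) := by
    push_cast; ring
  rw [hperiod, cos_add_int_mul_two_pi]

lemma Wc_eq_cos_add_mul (hl0 : 0 ≤ l) (hl1 : l < 1) (x : ℝ) :
    Wc b l x = cos (2 * π * x) + l * Wc b l (b * x) := by
  rw [Wc, (summable_Wc hl0 hl1 x).tsum_eq_zero_add, Wc, ← tsum_mul_left]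
  congr 1
  · simp
  · exact tsum_congr fun n => by ring_nf

/-- The part of the Weierstrass function at `z / b ^ q` carried by the frequencies below `b ^ q`,
in the coordinate `z` and in units of `l ^ q`. -/
def lowFreq (b : ℕ) (l : ℝ) (q : ℕ) (z : ℝ) : ℝ :=
  ∑ j ∈ Finset.range q, l⁻¹ ^ (j + 1) * cos (2 * π * z / b ^ (j + 1))

lemma Wc_div_pow (hl1 : l < 1) (hbl : 1 < b * l) (q : ℕ) (z : ℝ) :
    Wc b l (z / b ^ q) = l ^ q * (Wc b l z + lowFreq b l q z) := by
  have hl0 := pos_of_one_lt_natCast_mul hbl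
  have hb0 := natCast_pos_of_one_lt_natCast_mul hbl
  induction q with
  | zero => simp [lowFreq]
  | succ q ih =>
    have harg : (b : ℝ) * (z / b ^ (q + 1)) = z / b ^ q := by rw [pow_succ]; field_simp
    rw [Wc_eq_cos_add_mul hl0.le hl1, harg, ih, lowFreq, lowFreq, Finset.sum_range_succ,
      ← add_assoc, mul_add _ _ (l⁻¹ ^ (q + 1) * _),
      ← mul_assoc (l ^ (q + 1)) (l⁻¹ ^ (q + 1)), ← mul_pow,
      mul_inv_cancel₀ hl0.ne', one_pow, mul_div_assoc]
    ring

/-- The slope of the inverse branches: `-2π` times this is the derivative of `lowFreq`. -/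
def branchSlope (b : ℕ) (l : ℝ) (q : ℕ) (z : ℝ) : ℝ :=
  ∑ j ∈ Finset.range q, (b * l : ℝ)⁻¹ ^ (j + 1) * sin (2 * π * z / b ^ (j + 1))

/-- The derivative of `branchSlope`. -/
def branchSlopeDeriv (b : ℕ) (l : ℝ) (q : ℕ) (z : ℝ) : ℝ :=
  ∑ j ∈ Finset.range q, (b * l : ℝ)⁻¹ ^ (j + 1) *
    (2 * π / b ^ (j + 1) * cos (2 * π * z / b ^ (j + 1)))

lemma hasDerivAt_phase (n : ℕ) (z : ℝ) :
    HasDerivAt (fun z : ℝ => 2 * π * z / b ^ n) (2 * π / b ^ n) z := by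
  simpa using ((hasDerivAt_id z).const_mul (2 * π)).div_const ((b : ℝ) ^ n)

lemma hasDerivAt_lowFreq (q : ℕ) (z : ℝ) :
    HasDerivAt (lowFreq b l q) (-(2 * π) * branchSlope b l q z) z := by
  refine (HasDerivAt.fun_sum fun j _ =>
    ((hasDerivAt_phase (j + 1) z).cos.const_mul (l⁻¹ ^ (j + 1)))).congr_deriv ?_
  rw [branchSlope, Finset.mul_sum]
  refine Finset.sum_congr rfl fun j _ => ?_
  rw [mul_inv, mul_pow, inv_pow (b : ℝ)]
  ring

lemma hasDerivAt_branchSlope (q : ℕ) (z : ℝ) :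
    HasDerivAt (branchSlope b l q) (branchSlopeDeriv b l q z) z := by
  refine (HasDerivAt.fun_sum fun j _ =>
    ((hasDerivAt_phase (j + 1) z).sin.const_mul ((b * l : ℝ)⁻¹ ^ (j + 1)))).congr_deriv ?_
  exact Finset.sum_congr rfl fun j _ => by ring

lemma abs_branchSlope_le (hbl : 1 < b * l) (q : ℕ) (z : ℝ) :
    |branchSlope b l q z| ≤ (b * l - 1)⁻¹ :=
  (abs_sum_range_inv_pow_succ_mul_le hbl zero_le_one
    (fun j => abs_sin_le_one (2 * π * z / b ^ (j + 1))) q).trans_eq (one_mul _)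

lemma two_pi_div_pow_le (hbl : 1 < b * l) (n : ℕ) : 2 * π / (b : ℝ) ^ n ≤ 2 * π :=
  div_le_self (by positivity) <| one_le_pow₀ <| by
    exact_mod_cast (natCast_pos_of_one_lt_natCast_mul hbl : (0 : ℝ) < b)

lemma abs_phase_sub_le (hbl : 1 < b * l) (n : ℕ) (x y : ℝ) :
    |2 * π * x / (b : ℝ) ^ n - 2 * π * y / (b : ℝ) ^ n| ≤ 2 * π * |x - y| := by
  rw [show 2 * π * x / (b : ℝ) ^ n - 2 * π * y / (b : ℝ) ^ n = 2 * π / b ^ n * (x - y) by ring,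
    abs_mul, abs_of_nonneg (by positivity)]
  gcongr
  exact two_pi_div_pow_le hbl n

lemma abs_branchSlope_sub_le (hbl : 1 < b * l) (q : ℕ) (x y : ℝ) :
    |branchSlope b l q x - branchSlope b l q y| ≤ 2 * π * (b * l - 1)⁻¹ * |x - y| := by
  rw [branchSlope, branchSlope, ← Finset.sum_sub_distrib]
  simp only [← mul_sub]
  rw [mul_right_comm (2 * π)]
  exact abs_sum_range_inv_pow_succ_mul_le hbl (by positivity)
    (fun j => (abs_sin_sub_sin_le _ _).trans (abs_phase_sub_le hbl (j + 1) x y)) q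

lemma abs_branchSlopeDeriv_sub_le (hbl : 1 < b * l) (q : ℕ) (x y : ℝ) :
    |branchSlopeDeriv b l q x - branchSlopeDeriv b l q y|
      ≤ (2 * π) ^ 2 * (b * l - 1)⁻¹ * |x - y| := by
  rw [branchSlopeDeriv, branchSlopeDeriv, ← Finset.sum_sub_distrib]
  simp only [← mul_sub]
  rw [mul_right_comm ((2 * π) ^ 2)]
  refine abs_sum_range_inv_pow_succ_mul_le hbl (by positivity) (fun j => ?_) q
  rw [abs_mul, abs_of_nonneg (by positivity), sq, mul_assoc (2 * π)]
  exact mul_le_mul (two_pi_div_pow_le hbl (j + 1))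
    ((abs_cos_sub_cos_le _ _).trans (abs_phase_sub_le hbl (j + 1) x y)) (abs_nonneg _)
    two_pi_pos.le

lemma abs_lowFreq_sub_le (hbl : 1 < b * l) (q : ℕ) (x y : ℝ) :
    |lowFreq b l q x - lowFreq b l q y| ≤ 2 * π * (b * l - 1)⁻¹ * |x - y| :=
  abs_sub_le_of_abs_deriv_le (hasDerivAt_lowFreq q) (fun z => by
    rw [neg_mul, abs_neg, abs_mul, abs_of_pos two_pi_pos]
    gcongr
    exact abs_branchSlope_le hbl q z) x y

lemma abs_lowFreq_add_sub_le (hbl : 1 < b * l) (q : ℕ) (z s : ℝ) :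
    |lowFreq b l q (z + s) - lowFreq b l q z + 2 * π * branchSlope b l q z * s|
      ≤ (2 * π) ^ 2 * (b * l - 1)⁻¹ * s ^ 2 := by
  have hlip (x y : ℝ) : |-(2 * π) * branchSlope b l q x - -(2 * π) * branchSlope b l q y|
      ≤ (2 * π) ^ 2 * (b * l - 1)⁻¹ * |x - y| := by
    rw [← mul_sub, neg_mul, abs_neg, abs_mul, abs_of_pos two_pi_pos, sq, mul_assoc (2 * π),
      mul_assoc (2 * π)]
    exact mul_le_mul_of_nonneg_left (abs_branchSlope_sub_le hbl q x y) two_pi_pos.le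
  convert abs_sub_sub_deriv_mul_le (hasDerivAt_lowFreq (b := b) (l := l) q) hlip z (z + s) using 2
  all_goals ring

lemma abs_Wc_div_pow_sub_le (hl1 : l < 1) (hbl : 1 < b * l) (q : ℕ) (x y : ℝ) :
    |Wc b l (x / b ^ q) - Wc b l (y / b ^ q)|
      ≤ l ^ q * (2 * (1 - l)⁻¹ + 2 * π * (b * l - 1)⁻¹ * |x - y|) := by
  have hl0 := pos_of_one_lt_natCast_mul hbl
  rw [Wc_div_pow hl1 hbl, Wc_div_pow hl1 hbl, ← mul_sub, abs_mul, abs_of_pos (pow_pos hl0 q),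
    add_sub_add_comm]
  gcongr
  exact (abs_add_le _ _).trans
    (add_le_add (abs_Wc_sub_le hl0.le hl1 x y) (abs_lowFreq_sub_le hbl q x y))

lemma abs_Wc_sub_le_of_mul_abs_sub_le_one (hl1 : l < 1) (hbl : 1 < b * l) {n : ℕ} {x y : ℝ}
    (hxy : (b : ℝ) ^ n * |x - y| ≤ 1) :
    |Wc b l x - Wc b l y| ≤ l ^ n * (2 * (1 - l)⁻¹ + 2 * π * (b * l - 1)⁻¹) := by
  have hl0 := pos_of_one_lt_natCast_mul hbl
  have hbn := pow_pos (natCast_pos_of_one_lt_natCast_mul hbl) n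
  have : 0 < (b * l - 1 : ℝ)⁻¹ := inv_pos.2 (by linarith)
  have hosc := abs_Wc_div_pow_sub_le hl1 hbl n (b ^ n * x) (b ^ n * y)
  rw [mul_div_cancel_left₀ _ hbn.ne', mul_div_cancel_left₀ _ hbn.ne', ← mul_sub, abs_mul,
    abs_of_pos hbn] at hosc
  exact hosc.trans <| mul_le_mul_of_nonneg_left
    (add_le_add le_rfl (mul_le_of_le_one_right (by positivity) hxy)) (by positivity)

lemma abs_Wc_sub_le_mul_rpow (hl1 : l < 1) (hbl : 1 < b * l) {α : NNReal}
    (hα : (b : ℝ) ^ (-(α : ℝ)) = l) (x y : ℝ) : |Wc b l x - Wc b l y|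
      ≤ l⁻¹ * (2 * (1 - l)⁻¹ + 2 * π * (b * l - 1)⁻¹) * |x - y| ^ (α : ℝ) := by
  have hl0 := pos_of_one_lt_natCast_mul hbl
  have hb0 := natCast_pos_of_one_lt_natCast_mul hbl
  have : 0 < (1 - l)⁻¹ := inv_pos.2 (by linarith)
  have : 0 < (b * l - 1 : ℝ)⁻¹ := inv_pos.2 (by linarith)
  set M := 2 * (1 - l)⁻¹ + 2 * π * (b * l - 1)⁻¹
  have hM0 : 0 < M := by positivity
  rcases eq_or_ne x y with rfl | hxy
  · rw [sub_self, abs_zero]; positivity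
  rcases le_or_gt |x - y| 1 with hle | hgt
  · obtain ⟨n, -, hlt, hle⟩ := exists_inv_pow_succ_lt_and_le_inv_pow (N := 0)
      (one_lt_natCast_of_one_lt_natCast_mul hl1 hbl) (abs_pos.2 (sub_ne_zero.2 hxy)) (by simpa)
    have hpow : l ^ (n + 1) ≤ |x - y| ^ (α : ℝ) := by
      refine le_of_eq_of_le ?_ (rpow_le_rpow (by positivity) hlt.le α.2)
      rw [← hα, inv_rpow (by positivity), ← rpow_neg (by positivity), ← rpow_natCast_mul hb0.le,
        mul_comm, rpow_mul_natCast hb0.le]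
    calc |Wc b l x - Wc b l y| ≤ l ^ n * M :=
          abs_Wc_sub_le_of_mul_abs_sub_le_one hl1 hbl
            (by rwa [← le_inv_mul_iff₀ (by positivity), mul_one])
      _ = l⁻¹ * M * l ^ (n + 1) := by rw [pow_succ]; field_simp
      _ ≤ l⁻¹ * M * |x - y| ^ (α : ℝ) := by gcongr
  · calc |Wc b l x - Wc b l y| ≤ M :=
          (abs_Wc_sub_le hl0.le hl1 x y).trans (le_add_of_nonneg_right (by positivity))
      _ ≤ l⁻¹ * M * |x - y| ^ (α : ℝ) := by
          rw [mul_right_comm]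
          exact le_mul_of_one_le_left hM0.le
            (one_le_mul_of_one_le_of_one_le ((one_le_inv₀ hl0).2 hl1.le)
              (one_le_rpow hgt.le α.2))

/-- The value `2 + log λ / log b` to be shown to be the dimension of the graph of the Weierstrass
function. -/
def graphDim (b : ℕ) (l : ℝ) : ℝ := 2 + log l / log b

lemma natCast_rpow_graphDim_sub_two (hl1 : l < 1) (hbl : 1 < b * l) :
    (b : ℝ) ^ (graphDim b l - 2) = l := by
  have hb1 := one_lt_natCast_of_one_lt_natCast_mul hl1 hbl
  rw [graphDim, add_sub_cancel_left, log_div_log, rpow_logb (by linarith) hb1.ne'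
    (pos_of_one_lt_natCast_mul hbl)]

lemma graphDim_lt_two (hl1 : l < 1) (hbl : 1 < b * l) : graphDim b l < 2 := by
  have hb1 := one_lt_natCast_of_one_lt_natCast_mul hl1 hbl
  have := div_neg_of_neg_of_pos (log_neg (pos_of_one_lt_natCast_mul hbl) hl1) (log_pos hb1)
  rw [graphDim]
  linarith

lemma one_lt_graphDim (hl1 : l < 1) (hbl : 1 < b * l) : 1 < graphDim b l := by
  have hb0 := natCast_pos_of_one_lt_natCast_mul hbl
  refine (Real.rpow_lt_rpow_left_iff (one_lt_natCast_of_one_lt_natCast_mul hl1 hbl)).1 ?_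
  rw [rpow_one, ← sub_add_cancel (graphDim b l) 2, rpow_add hb0,
    natCast_rpow_graphDim_sub_two hl1 hbl, rpow_two]
  nlinarith

lemma dimH_graph_Wc_le (hl1 : l < 1) (hbl : 1 < b * l) :
    dimH ((fun x => (x, Wc b l x)) '' Ico 0 1) ≤ ENNReal.ofReal (graphDim b l) := by
  lift 2 - graphDim b l to NNReal using by linarith [graphDim_lt_two hl1 hbl] with α hα
  have hrpow : (b : ℝ) ^ (-(α : ℝ)) = l := by
    rw [hα, neg_sub, natCast_rpow_graphDim_sub_two hl1 hbl]
  have : 0 < (1 - l)⁻¹ := inv_pos.2 (by linarith)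
  have : 0 < (b * l - 1 : ℝ)⁻¹ := inv_pos.2 (by linarith)
  have hl0 := pos_of_one_lt_natCast_mul hbl
  have hα1 : (α : ℝ) ≤ 1 := by linarith [one_lt_graphDim hl1 hbl]
  refine (dimH_graph_le_of_holderOnWith (α := α)
    (C := Real.toNNReal (l⁻¹ * (2 * (1 - l)⁻¹ + 2 * π * (b * l - 1)⁻¹)))
    (by exact_mod_cast hα1) fun x _ y _ => ?_).trans_eq ?_
  · rw [edist_dist, edist_dist, ENNReal.ofReal_rpow_of_nonneg dist_nonneg α.coe_nonneg,
      ← ENNReal.ofReal, ← ENNReal.ofReal_mul (by positivity)]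
    exact ENNReal.ofReal_le_ofReal (abs_Wc_sub_le_mul_rpow hl1 hbl hrpow x y)
  · rw [← ENNReal.ofReal_coe_nnreal, NNReal.coe_sub (by exact_mod_cast hα1.trans one_le_two), hα]
    norm_num

end Weierstrass

section Coincidences

variable {b : ℕ} {l : ℝ}

/-- The difference of the slopes of two inverse branches whose indices differ by `a`. -/
def slopeDiff (b : ℕ) (l : ℝ) (q : ℕ) (a : ℤ) (z : ℝ) : ℝ :=
  branchSlope b l q (z + a) - branchSlope b l q z

/-- The derivative of `slopeDiff`. -/
def slopeDiffDeriv (b : ℕ) (l : ℝ) (q : ℕ) (a : ℤ) (z : ℝ) : ℝ :=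
  branchSlopeDeriv b l q (z + a) - branchSlopeDeriv b l q z

/-- Two inverse branches that differ in their last digit are transversal: their slopes and the
derivatives of their slopes do not both agree up to `δ`. -/
def Transversal (b : ℕ) (l δ : ℝ) : Prop :=
  ∀ (q : ℕ) (a : ℤ) (z : ℝ), ¬ (b : ℤ) ∣ a →
    δ ≤ |slopeDiff b l (q + 1) a z| ∨ δ ≤ |slopeDiffDeriv b l (q + 1) a z|

lemma hasDerivAt_slopeDiff (q : ℕ) (a : ℤ) (z : ℝ) :
    HasDerivAt (slopeDiff b l q a) (slopeDiffDeriv b l q a z) z :=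
  ((hasDerivAt_branchSlope q (z + a)).comp_add_const z a).sub (hasDerivAt_branchSlope q z)

lemma continuous_slopeDiff (q : ℕ) (a : ℤ) : Continuous (slopeDiff b l q a) :=
  continuous_iff_continuousAt.2 fun z => (hasDerivAt_slopeDiff q a z).continuousAt

lemma abs_slopeDiffDeriv_sub_le (hbl : 1 < b * l) (q : ℕ) (a : ℤ) (x y : ℝ) :
    |slopeDiffDeriv b l q a x - slopeDiffDeriv b l q a y|
      ≤ 2 * ((2 * π) ^ 2 * (b * l - 1)⁻¹) * |x - y| := by
  have hshift := abs_branchSlopeDeriv_sub_le hbl q (x + a) (y + a)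
  rw [add_sub_add_right_eq_sub] at hshift
  rw [slopeDiffDeriv, slopeDiffDeriv, sub_sub_sub_comm]
  linarith [abs_sub (branchSlopeDeriv b l q (x + a) - branchSlopeDeriv b l q (y + a))
    (branchSlopeDeriv b l q x - branchSlopeDeriv b l q y), abs_branchSlopeDeriv_sub_le hbl q x y]

lemma Transversal.exists_volume_slopeDiff_le {δ : ℝ} (hbl : 1 < b * l) (hδ : 0 < δ)
    (htr : Transversal b l δ) : ∃ c > 0, ∀ (q : ℕ) (a : ℤ) (ρ : ℝ), ¬ (b : ℤ) ∣ a →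
      volume {x ∈ Ico (0 : ℝ) 1 | |slopeDiff b l (q + 1) a (b ^ (q + 1) * x)| ≤ ρ}
        ≤ ENNReal.ofReal (c * ρ) := by
  have hb0 := natCast_pos_of_one_lt_natCast_mul hbl
  obtain ⟨P, hP⟩ := exists_nat_ge (max 1 (2 * (2 * ((2 * π) ^ 2 * (b * l - 1)⁻¹)) / δ))
  rw [max_le_iff, div_le_iff₀' hδ] at hP
  refine ⟨4 * P / δ, by have := hP.1; positivity, fun q a ρ ha => ?_⟩
  rcases lt_or_ge ρ δ with hρ | hρ
  · have hsub := volume_abs_mul_le_le (hasDerivAt_slopeDiff (q + 1) a)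
      (abs_slopeDiffDeriv_sub_le hbl (q + 1) a) hδ (fun z => htr q a z ha)
      (by exact_mod_cast one_pos.trans_le hP.1) hP.2
      (pow_pos (by exact_mod_cast hb0 : 0 < b) (q + 1)) hρ
    rwa [Nat.cast_pow] at hsub
  · calc volume {x ∈ Ico (0 : ℝ) 1 | |slopeDiff b l (q + 1) a (b ^ (q + 1) * x)| ≤ ρ}
        ≤ volume (Ico (0 : ℝ) 1) := measure_mono (sep_subset _ _)
      _ = ENNReal.ofReal 1 := by rw [Real.volume_Ico, sub_zero]
      _ ≤ ENNReal.ofReal (4 * P / δ * ρ) := by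
        refine ENNReal.ofReal_le_ofReal ?_
        rw [div_mul_eq_mul_div, one_le_div hδ]
        nlinarith [hP.1]

lemma branchSlope_succ_mul (hbl : 1 < b * l) (q : ℕ) (w : ℝ) :
    branchSlope b l (q + 1) (b * w) = (b * l : ℝ)⁻¹ * (sin (2 * π * w) + branchSlope b l q w) := by
  have hb0 := natCast_pos_of_one_lt_natCast_mul hbl
  rw [branchSlope, branchSlope, Finset.sum_range_succ', mul_add, Finset.mul_sum, add_comm, zero_add,
    pow_one, pow_one, mul_left_comm (2 * π), mul_div_cancel_left₀ _ hb0.ne']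
  congr 1
  refine Finset.sum_congr rfl fun j _ => ?_
  rw [pow_succ' _ (j + 1), pow_succ' (b : ℝ) (j + 1), mul_div_mul_left _ _ hb0.ne', mul_assoc]

lemma slopeDiff_succ_mul (hbl : 1 < b * l) (q : ℕ) (e : ℤ) (z : ℝ) :
    slopeDiff b l (q + 1) (b * e) (b * z) = (b * l : ℝ)⁻¹ * slopeDiff b l q e z := by
  rw [slopeDiff, slopeDiff, Int.cast_mul, Int.cast_natCast, ← mul_add, branchSlope_succ_mul hbl,
    branchSlope_succ_mul hbl, ← mul_sub, mul_add (2 * π), mul_comm (2 * π) (e : ℝ),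
    sin_add_int_mul_two_pi, add_sub_add_left_eq_sub]

/-- An upper bound for the expected number of inverse branches of order `q` whose slope agrees up to
`ρ` with that of a random one. The sum runs over all differences of two branch indices. -/
def coincidence (b : ℕ) (l : ℝ) (q : ℕ) (ρ : ℝ) : ENNReal :=
  ∑ a ∈ Finset.Ioo (-(b : ℤ) ^ q) ((b : ℤ) ^ q),
    volume {x ∈ Ico (0 : ℝ) 1 | |slopeDiff b l q a (b ^ q * x)| ≤ ρ}

lemma coincidence_zero_le (ρ : ℝ) : coincidence b l 0 ρ ≤ 1 := by
  have hsingleton : Finset.Ioo (-(b : ℤ) ^ 0) ((b : ℤ) ^ 0) = {0} := by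
    ext a
    rw [pow_zero, Finset.mem_Ioo, Finset.mem_singleton]
    omega
  rw [coincidence, hsingleton, Finset.sum_singleton]
  exact (measure_mono (sep_subset _ _)).trans_eq (by simp)

lemma sum_dvd_volume_slopeDiff_eq_coincidence (hbl : 1 < b * l) (q : ℕ) (ρ : ℝ) :
    ∑ a ∈ Finset.Ioo (-(b : ℤ) ^ (q + 1)) ((b : ℤ) ^ (q + 1)) with (b : ℤ) ∣ a,
        volume {x ∈ Ico (0 : ℝ) 1 | |slopeDiff b l (q + 1) a (b ^ (q + 1) * x)| ≤ ρ}
      = coincidence b l q (ρ * (b * l)) := by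
  have hbz : (0 : ℤ) < b := by exact_mod_cast natCast_pos_of_one_lt_natCast_mul hbl
  refine (Finset.sum_nbij (fun e : ℤ => (b : ℤ) * e) (fun e he => ?_)
    (fun _ _ _ _ hxy => mul_left_cancel₀ hbz.ne' hxy) (fun a ha => ?_) fun e _ => ?_).symm
  · rw [Finset.mem_Ioo] at he
    rw [Finset.mem_filter, Finset.mem_Ioo, pow_succ]
    exact ⟨⟨by nlinarith, by nlinarith⟩, dvd_mul_right _ _⟩
  · rw [Finset.mem_coe, Finset.mem_filter, Finset.mem_Ioo, pow_succ] at ha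
    obtain ⟨⟨hlt, hgt⟩, e, rfl⟩ := ha
    exact ⟨e, Finset.mem_Ioo.2 ⟨by nlinarith, by nlinarith⟩, rfl⟩
  · congr 1
    ext x
    have hbl0 : (0 : ℝ) < b * l := one_pos.trans hbl
    simp only [mem_ofPred_eq, pow_succ']
    rw [mul_assoc, slopeDiff_succ_mul hbl, abs_mul, abs_of_pos (inv_pos.2 hbl0),
      inv_mul_le_iff₀ hbl0, mul_comm ρ]

lemma sum_Ioo_neg_pow_le (p : ℤ → Prop) [DecidablePred p] (n : ℕ) {f : ℤ → ENNReal} {M : ENNReal}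
    (hf : ∀ a, p a → f a ≤ M) :
    ∑ a ∈ Finset.Ioo (-(b : ℤ) ^ n) ((b : ℤ) ^ n) with p a, f a ≤ 2 * b ^ n * M := by
  refine (Finset.sum_le_card_nsmul _ _ M fun a ha => hf a (Finset.mem_filter.1 ha).2).trans ?_
  rw [nsmul_eq_mul]
  gcongr
  have hcard : (Finset.Ioo (-(b : ℤ) ^ n) ((b : ℤ) ^ n)).card ≤ 2 * b ^ n := by
    have : (0 : ℤ) ≤ (b : ℤ) ^ n := by positivity
    rw [Int.card_Ioo, Int.toNat_le]
    push_cast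
    omega
  exact_mod_cast (Finset.card_filter_le _ _).trans hcard

lemma Transversal.exists_coincidence_le {δ : ℝ} (hl1 : l < 1) (hbl : 1 < b * l) (hδ : 0 < δ)
    (htr : Transversal b l δ) :
    ∃ C > 0, ∀ (q : ℕ) (ρ : ℝ), 0 ≤ ρ →
      coincidence b l q ρ ≤ ENNReal.ofReal (C * b ^ q * ρ + 1) := by
  have hl2 : 0 < 1 - l := by linarith
  have := pos_of_one_lt_natCast_mul hbl
  obtain ⟨c, hc, hvol⟩ := htr.exists_volume_slopeDiff_le hbl hδ
  refine ⟨2 * c / (1 - l), by positivity, fun q => ?_⟩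
  induction q with
  | zero =>
    intro ρ hρ
    exact (coincidence_zero_le ρ).trans (ENNReal.one_le_ofReal.2
      (le_add_of_nonneg_left (by positivity)))
  | succ q ih =>
    intro ρ hρ
    have hnot_dvd := sum_Ioo_neg_pow_le (b := b) (fun a => ¬ (b : ℤ) ∣ a) (q + 1)
      fun a ha => hvol q a ρ ha
    rw [coincidence, ← Finset.sum_filter_add_sum_filter_not _ (fun a : ℤ => (b : ℤ) ∣ a),
      sum_dvd_volume_slopeDiff_eq_coincidence hbl]
    calc _ ≤ ENNReal.ofReal (2 * c / (1 - l) * b ^ q * (ρ * (b * l)) + 1)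
            + ENNReal.ofReal (2 * b ^ (q + 1) * (c * ρ)) := by
          refine add_le_add (ih _ (by positivity)) (hnot_dvd.trans_eq ?_)
          rw [ENNReal.ofReal_mul (p := 2 * (b : ℝ) ^ (q + 1)) (by positivity),
            ENNReal.ofReal_mul two_pos.le,
            ENNReal.ofReal_pow b.cast_nonneg, ENNReal.ofReal_natCast, ENNReal.ofReal_ofNat]
      _ = ENNReal.ofReal (2 * c / (1 - l) * b ^ (q + 1) * ρ + 1) := by
          rw [← ENNReal.ofReal_add (by positivity) (by positivity)]
          congr 1
          field_simp
          ring

/-- An upper bound for the number of inverse branches of order `q` whose slope agrees up to `ρ` with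
that of the branch through `x`. The sum runs over all differences of two branch indices, whichever
of them occur for the branch through `x`. -/
def branchCount (b : ℕ) (l : ℝ) (q : ℕ) (ρ x : ℝ) : ENNReal :=
  ∑ a ∈ Finset.Ioo (-(b : ℤ) ^ q) ((b : ℤ) ^ q),
    {x : ℝ | |slopeDiff b l q a (b ^ q * x)| ≤ ρ}.indicator 1 x

lemma measurableSet_abs_slopeDiff_le (q : ℕ) (a : ℤ) (ρ : ℝ) :
    MeasurableSet {x : ℝ | |slopeDiff b l q a (b ^ q * x)| ≤ ρ} :=
  measurableSet_le
    ((continuous_slopeDiff q a).comp (continuous_const_mul _)).abs.measurable measurable_const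

lemma measurable_branchCount (q : ℕ) (ρ : ℝ) : Measurable (branchCount b l q ρ) :=
  Finset.measurable_fun_sum _ fun a _ =>
    measurable_one.indicator (measurableSet_abs_slopeDiff_le q a ρ)

lemma setLIntegral_branchCount (q : ℕ) (ρ : ℝ) :
    ∫⁻ x in Ico (0 : ℝ) 1, branchCount b l q ρ x = coincidence b l q ρ := by
  simp only [branchCount, coincidence]
  rw [lintegral_finsetSum _ fun a _ =>
    measurable_one.indicator (measurableSet_abs_slopeDiff_le q a ρ)]
  refine Finset.sum_congr rfl fun a _ => ?_
  rw [lintegral_indicator_one (measurableSet_abs_slopeDiff_le q a ρ),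
    Measure.restrict_apply (measurableSet_abs_slopeDiff_le q a ρ), inter_comm]
  rfl

lemma volume_lt_branchCount_le (q : ℕ) (ρ : ℝ) {K : ENNReal} (hK : K ≠ 0) (hK' : K ≠ ⊤) :
    volume {x ∈ Ico (0 : ℝ) 1 | K < branchCount b l q ρ x} ≤ coincidence b l q ρ / K := by
  rw [← setLIntegral_branchCount]
  refine le_trans ?_ (meas_ge_le_lintegral_div (measurable_branchCount q ρ).aemeasurable hK hK')
  rw [Measure.restrict_apply (measurableSet_le measurable_const (measurable_branchCount q ρ))]
  exact measure_mono fun x hx => ⟨hx.2.le, hx.1⟩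

end Coincidences

section Recursion

variable {b : ℕ} {l r : ℝ} {q k : ℕ}

/-- The increments of size comparable to `b ^ (-n)`. -/
def annulus (b n : ℕ) : Set ℝ := {t | ((b : ℝ) ^ (n + 1))⁻¹ < |t| ∧ |t| ≤ ((b : ℝ) ^ n)⁻¹}

/-- The increments of size comparable to `b ^ (-n)` that change the value of the Weierstrass
function at `x` by at most `r`. -/
def closeIncrements (b : ℕ) (l : ℝ) (n : ℕ) (r x : ℝ) : Set ℝ :=
  {t ∈ annulus b n | |Wc b l (x + t) - Wc b l x| ≤ r}

/-- The increments of size comparable to `b ^ (-k)` that change the value of the Weierstrass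
function by at most `r` when transported to `z / b ^ q` along an inverse branch. -/
def branchIncrements (b : ℕ) (l : ℝ) (q k : ℕ) (r z : ℝ) : Set ℝ :=
  {s ∈ annulus b k | |Wc b l ((z + s) / b ^ q) - Wc b l (z / b ^ q)| ≤ r}

/-- The measure of the pairs `(x, t)` with `x ∈ H` and `t` an increment of size comparable to
`b ^ (-n)` changing the value of the Weierstrass function at `x` by at most `r`. -/
def pairMass (b : ℕ) (l : ℝ) (n : ℕ) (r : ℝ) (H : Set ℝ) : ENNReal :=
  ∫⁻ x in Ico (0 : ℝ) 1, H.indicator (fun x => volume (closeIncrements b l n r x)) x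

/-- The constant `R` for which pairs at height distance `R * b ^ (-n)` are counted. It is large
enough for the recursion over the scales to reproduce it. -/
def heightConst (b : ℕ) (l : ℝ) : ℝ :=
  2 * (1 - l)⁻¹ + ((2 * π) ^ 2 + 4 * π) * (b * l - 1)⁻¹

/-- The accuracy up to which two branches sharing an increment at scale `k` have equal slopes. -/
def slopeTol (b : ℕ) (l : ℝ) (k : ℕ) : ℝ :=
  (heightConst b l + (2 * π) ^ 2 * (b * l - 1)⁻¹) * b * ((b : ℝ) ^ k)⁻¹

lemma heightConst_pos (hl1 : l < 1) (hbl : 1 < b * l) : 0 < heightConst b l := by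
  have : 0 < (1 - l)⁻¹ := inv_pos.2 (by linarith)
  have : 0 < (b * l - 1 : ℝ)⁻¹ := inv_pos.2 (by linarith)
  rw [heightConst]
  positivity

lemma slopeTol_pos (hl1 : l < 1) (hbl : 1 < b * l) (k : ℕ) : 0 < slopeTol b l k := by
  have : 0 < (b * l - 1 : ℝ)⁻¹ := inv_pos.2 (by linarith)
  have := heightConst_pos hl1 hbl
  have := natCast_pos_of_one_lt_natCast_mul hbl
  rw [slopeTol]
  positivity

lemma measurableSet_annulus (n : ℕ) : MeasurableSet (annulus b n) :=
  (measurableSet_lt measurable_const measurable_id.abs).inter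
    (measurableSet_le measurable_id.abs measurable_const)

lemma measurableSet_branchIncrements (hl0 : 0 ≤ l) (hl1 : l < 1) (z : ℝ) :
    MeasurableSet (branchIncrements b l q k r z) := by
  have hW := continuous_Wc (b := b) hl0 hl1
  have hinc : Continuous fun s => |Wc b l ((z + s) / b ^ q) - Wc b l (z / b ^ q)| := by fun_prop
  exact (measurableSet_annulus k).inter (measurableSet_le hinc.measurable measurable_const)

lemma measurableSet_closeIncrements (hl0 : 0 ≤ l) (hl1 : l < 1) (x : ℝ) :
    MeasurableSet (closeIncrements b l k r x) := by
  have hW := continuous_Wc (b := b) hl0 hl1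
  have hinc : Continuous fun t => |Wc b l (x + t) - Wc b l x| := by fun_prop
  exact (measurableSet_annulus k).inter (measurableSet_le hinc.measurable measurable_const)

lemma measurable_volume_closeIncrements (hl0 : 0 ≤ l) (hl1 : l < 1) (n : ℕ) (r : ℝ) :
    Measurable fun x => volume (closeIncrements b l n r x) := by
  have hW := continuous_Wc (b := b) hl0 hl1
  have hinc : Continuous fun p : ℝ × ℝ => |Wc b l (p.1 + p.2) - Wc b l p.1| := by fun_prop
  refine measurable_measure_prodMk_left
    (s := {p : ℝ × ℝ | p.2 ∈ annulus b n ∧ |Wc b l (p.1 + p.2) - Wc b l p.1| ≤ r}) ?_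
  exact ((measurableSet_annulus n).preimage measurable_snd).inter
    (measurableSet_le hinc.measurable measurable_const)

lemma volume_closeIncrements_div_pow (hl1 : l < 1) (hbl : 1 < b * l) (q k : ℕ) (r z : ℝ) :
    volume (closeIncrements b l (q + k) r (z / b ^ q))
      = ENNReal.ofReal ((b : ℝ) ^ q)⁻¹ * volume (branchIncrements b l q k r z) := by
  have hbq := pow_pos (natCast_pos_of_one_lt_natCast_mul hbl) q
  have hscale := setLIntegral_eq_ofReal_mul_setLIntegral_div (measurableSet_closeIncrements
    (pos_of_one_lt_natCast_mul hbl).le hl1 (z / b ^ q) (k := q + k) (r := r) (b := b)) 1 hbq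
  simp only [Pi.one_apply, setLIntegral_one] at hscale
  rw [hscale]
  congr 2
  ext s
  have hinv (n : ℕ) : ((b : ℝ) ^ (q + n))⁻¹ = ((b : ℝ) ^ n)⁻¹ / b ^ q := by
    rw [pow_add, mul_inv_rev, div_eq_mul_inv]
  simp only [closeIncrements, branchIncrements, annulus, mem_preimage, mem_ofPred_eq, add_assoc,
    hinv, abs_div, abs_of_pos hbq, div_lt_div_iff_of_pos_right hbq,
    div_le_div_iff_of_pos_right hbq, add_div]

lemma sq_le_of_mem_annulus {s : ℝ} (hs : s ∈ annulus b k) : s ^ 2 ≤ ((b : ℝ) ^ k)⁻¹ ^ 2 := by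
  rw [← sq_abs]
  exact pow_le_pow_left₀ (abs_nonneg s) hs.2 2

section BranchIncrements

variable (hl1 : l < 1) (hbl : 1 < b * l)
  (hr : r ≤ heightConst b l * (l ^ q * ((b : ℝ) ^ k)⁻¹ ^ 2))
include hl1 hbl hr

/- The low frequencies are affine along `s` up to second order, and the increment of `Wc` has to
cancel theirs. -/
lemma abs_Wc_add_sub_sub_le_of_mem_branchIncrements {z s : ℝ}
    (hs : s ∈ branchIncrements b l q k r z) :
    |(Wc b l (z + s) - Wc b l z) - 2 * π * branchSlope b l q z * s|
      ≤ (heightConst b l + (2 * π) ^ 2 * (b * l - 1)⁻¹) * ((b : ℝ) ^ k)⁻¹ ^ 2 := by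
  have : 0 < (b * l - 1 : ℝ)⁻¹ := inv_pos.2 (by linarith)
  have hlq := pow_pos (pos_of_one_lt_natCast_mul hbl) q
  have htotal : |(Wc b l (z + s) - Wc b l z) + (lowFreq b l q (z + s) - lowFreq b l q z)|
      ≤ heightConst b l * ((b : ℝ) ^ k)⁻¹ ^ 2 := by
    have hclose := hs.2.trans hr
    rw [Wc_div_pow hl1 hbl, Wc_div_pow hl1 hbl, ← mul_sub, add_sub_add_comm, abs_mul,
      abs_of_pos hlq, mul_left_comm] at hclose
    exact le_of_mul_le_mul_left hclose hlq
  have hlow := (abs_lowFreq_add_sub_le hbl q z s).trans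
    (mul_le_mul_of_nonneg_left (sq_le_of_mem_annulus hs.1) (by positivity))
  calc _ = |((Wc b l (z + s) - Wc b l z) + (lowFreq b l q (z + s) - lowFreq b l q z))
        - (lowFreq b l q (z + s) - lowFreq b l q z + 2 * π * branchSlope b l q z * s)| := by
        congr 1; ring
    _ ≤ _ := (abs_sub _ _).trans ((add_le_add htotal hlow).trans_eq (by ring))

lemma branchIncrements_subset_closeIncrements (z : ℝ) :
    branchIncrements b l q k r z
      ⊆ closeIncrements b l k (heightConst b l * ((b : ℝ) ^ k)⁻¹) z := by
  refine fun s hs => ⟨hs.1, ?_⟩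
  have : 0 < (1 - l)⁻¹ := inv_pos.2 (by linarith)
  have : 0 < (b * l - 1 : ℝ)⁻¹ := inv_pos.2 (by linarith)
  have hl0 := pos_of_one_lt_natCast_mul hbl
  have hb1 := one_lt_natCast_of_one_lt_natCast_mul hl1 hbl
  rcases Nat.eq_zero_or_pos k with rfl | hk
  · rw [pow_zero, inv_one, mul_one]
    exact (abs_Wc_sub_le hl0.le hl1 _ _).trans (le_add_of_nonneg_right (by positivity))
  set κ : ℝ := ((b : ℝ) ^ k)⁻¹ with hκ
  have : 0 < κ := by positivity
  have hκ2 : κ ≤ 1 / 2 := by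
    have hb2 : (2 : ℝ) ≤ b := by exact_mod_cast hb1
    rw [hκ, one_div]
    exact inv_anti₀ two_pos (hb2.trans (le_self_pow₀ hb1.le hk.ne'))
  have hslope : |2 * π * branchSlope b l q z * s| ≤ 2 * π * (b * l - 1 : ℝ)⁻¹ * κ := by
    rw [abs_mul, abs_mul, abs_of_pos two_pi_pos]
    exact mul_le_mul (mul_le_mul_of_nonneg_left (abs_branchSlope_le hbl q z) two_pi_pos.le) hs.1.2
      (abs_nonneg s) (by positivity)
  calc |Wc b l (z + s) - Wc b l z|
      ≤ (heightConst b l + (2 * π) ^ 2 * (b * l - 1)⁻¹) * κ ^ 2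
        + 2 * π * (b * l - 1 : ℝ)⁻¹ * κ := by
        linarith [abs_sub_abs_le_abs_sub (Wc b l (z + s) - Wc b l z)
          (2 * π * branchSlope b l q z * s),
          abs_Wc_add_sub_sub_le_of_mem_branchIncrements hl1 hbl hr hs]
    _ ≤ (heightConst b l + (2 * π) ^ 2 * (b * l - 1)⁻¹) * (κ * (1 / 2))
        + 2 * π * (b * l - 1 : ℝ)⁻¹ * κ := by
        have := heightConst_pos hl1 hbl
        rw [sq κ]
        gcongr
    _ ≤ heightConst b l * κ := by
        have : 0 < (1 - l)⁻¹ * κ := by positivity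
        rw [heightConst]
        linarith

lemma abs_slopeDiff_le_slopeTol_of_mem_branchIncrements {z s : ℝ} {a : ℤ}
    (hs : s ∈ branchIncrements b l q k r z) (hsa : s ∈ branchIncrements b l q k r (z + a)) :
    |slopeDiff b l q a z| ≤ slopeTol b l k := by
  have hb0 := natCast_pos_of_one_lt_natCast_mul hbl
  have hexp := abs_Wc_add_sub_sub_le_of_mem_branchIncrements hl1 hbl hr hs
  have hexpa := abs_Wc_add_sub_sub_le_of_mem_branchIncrements hl1 hbl hr hsa
  rw [add_right_comm, Wc_add_intCast, Wc_add_intCast] at hexpa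
  rw [slopeTol]
  set E := heightConst b l + (2 * π) ^ 2 * (b * l - 1 : ℝ)⁻¹
  set κ : ℝ := ((b : ℝ) ^ k)⁻¹ with hκ
  have hκ0 : 0 < κ := by positivity
  have hs_lt : κ < |s| * b := by
    rw [hκ, ← div_lt_iff₀ hb0, div_eq_mul_inv, ← mul_inv, ← pow_succ]
    exact hs.1.1
  have hdiff : 2 * π * (|slopeDiff b l q a z| * |s|) ≤ 2 * E * κ ^ 2 := by
    rw [← abs_mul, ← abs_of_pos two_pi_pos, ← abs_mul]
    calc |2 * π * (slopeDiff b l q a z * s)|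
        = |(Wc b l (z + s) - Wc b l z - 2 * π * branchSlope b l q z * s)
          - (Wc b l (z + s) - Wc b l z - 2 * π * branchSlope b l q (z + a) * s)| := by
          rw [slopeDiff]; congr 1; ring
      _ ≤ 2 * E * κ ^ 2 := (abs_sub _ _).trans (by linarith)
  refine le_of_mul_le_mul_right ?_ hκ0
  calc |slopeDiff b l q a z| * κ ≤ |slopeDiff b l q a z| * (|s| * b) := by gcongr
    _ = 1 * (|slopeDiff b l q a z| * |s|) * b := by ring
    _ ≤ π * (|slopeDiff b l q a z| * |s|) * b := by
        gcongr; linarith [pi_gt_three]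
    _ ≤ E * κ ^ 2 * b := mul_le_mul_of_nonneg_right (by linarith) hb0.le
    _ = E * b * κ * κ := by ring

lemma sum_indicator_branchIncrements_le_branchCount {u s : ℝ} {I : Finset ℕ}
    (hI : I ⊆ Finset.range (b ^ q)) {a₀ : ℕ} (ha₀ : a₀ ∈ I)
    (hs : s ∈ branchIncrements b l q k r (u + a₀)) :
    ∑ a ∈ I, (branchIncrements b l q k r (u + a)).indicator 1 s
      ≤ branchCount b l q (slopeTol b l k) ((u + a₀) / b ^ q) := by
  have hbq := pow_pos (natCast_pos_of_one_lt_natCast_mul hbl) q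
  set T : ℤ → Set ℝ := fun a => {x | |slopeDiff b l q a (b ^ q * x)| ≤ slopeTol b l k}
  calc ∑ a ∈ I, (branchIncrements b l q k r (u + a)).indicator (1 : ℝ → ENNReal) s
      ≤ ∑ a ∈ I, (T (a - a₀)).indicator 1 ((u + a₀) / b ^ q) := by
        refine Finset.sum_le_sum fun a _ => ?_
        by_cases hsa : s ∈ branchIncrements b l q k r (u + a)
        · rw [indicator_of_mem hsa, indicator_of_mem]
          · rfl
          · rw [mem_ofPred_eq, mul_div_cancel₀ _ hbq.ne']
            refine abs_slopeDiff_le_slopeTol_of_mem_branchIncrements hl1 hbl hr hs ?_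
            rwa [Int.cast_sub, Int.cast_natCast, Int.cast_natCast, add_assoc, add_sub_cancel]
        · rw [indicator_of_notMem hsa]
          exact zero_le
    _ = ∑ a ∈ I.image fun a : ℕ => (a : ℤ) - a₀, (T a).indicator 1 ((u + a₀) / b ^ q) :=
        (Finset.sum_image (f := fun a => (T a).indicator (1 : ℝ → ENNReal) ((u + a₀) / b ^ q))
          (g := fun a : ℕ => (a : ℤ) - a₀) fun x _ y _ h => by simpa using h).symm
    _ ≤ branchCount b l q (slopeTol b l k) ((u + a₀) / b ^ q) := by
        refine Finset.sum_le_sum_of_subset fun e he => ?_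
        obtain ⟨a, ha, rfl⟩ := Finset.mem_image.1 he
        have hlt : (a : ℤ) < (b : ℤ) ^ q := by exact_mod_cast Finset.mem_range.1 (hI ha)
        have hlt₀ : (a₀ : ℤ) < (b : ℤ) ^ q := by exact_mod_cast Finset.mem_range.1 (hI ha₀)
        rw [Finset.mem_Ioo]
        omega

lemma sum_volume_branchIncrements_le {u : ℝ} {I : Finset ℕ} (hI : I ⊆ Finset.range (b ^ q))
    {K : ENNReal}
    (hK : ∀ a ∈ I, branchCount b l q (slopeTol b l k) ((u + a) / b ^ q) ≤ K) :
    ∑ a ∈ I, volume (branchIncrements b l q k r (u + a))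
      ≤ K * volume (closeIncrements b l k (heightConst b l * ((b : ℝ) ^ k)⁻¹) u) := by
  refine sum_measure_le_mul_measure
    (fun a _ => measurableSet_branchIncrements (pos_of_one_lt_natCast_mul hbl).le hl1 _)
    (fun a _ s hs => ?_) fun s _ => ?_
  · have hsub := branchIncrements_subset_closeIncrements hl1 hbl hr _ hs
    have hperiod (x : ℝ) : Wc b l (x + a) = Wc b l x := by exact_mod_cast Wc_add_intCast x a
    rw [closeIncrements, mem_ofPred_eq, add_right_comm, hperiod, hperiod] at hsub
    exact hsub
  · by_cases hex : ∃ a₀ ∈ I, s ∈ branchIncrements b l q k r (u + (a₀ : ℕ))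
    · obtain ⟨a₀, ha₀, hs⟩ := hex
      exact (sum_indicator_branchIncrements_le_branchCount hl1 hbl hr hI ha₀ hs).trans (hK a₀ ha₀)
    · rw [Finset.sum_eq_zero fun a ha => indicator_of_notMem (fun hs => hex ⟨a, ha, hs⟩) _]
      exact zero_le

lemma pairMass_add_le {K : ENNReal} {H H' : Set ℝ} (hH : MeasurableSet H) (hKtop : K ≠ ⊤)
    (hK : ∀ x ∈ H, branchCount b l q (slopeTol b l k) x ≤ K)
    (hH' : ∀ x ∈ H, Int.fract ((b : ℝ) ^ q * x) ∈ H') :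
    pairMass b l (q + k) r H ≤ ENNReal.ofReal (((b : ℝ) ^ q)⁻¹ ^ 2) * K *
      pairMass b l k (heightConst b l * ((b : ℝ) ^ k)⁻¹) H' := by
  classical
  have hbq := pow_pos (natCast_pos_of_one_lt_natCast_mul hbl) q
  have hl0 := pos_of_one_lt_natCast_mul hbl
  have hbranches : ∀ u ∈ Ico (0 : ℝ) 1, ∑ a ∈ Finset.range (b ^ q),
      H.indicator (fun x => volume (closeIncrements b l (q + k) r x)) ((u + a) / b ^ q)
      ≤ ENNReal.ofReal ((b : ℝ) ^ q)⁻¹ * K * H'.indicator (fun x =>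
        volume (closeIncrements b l k (heightConst b l * ((b : ℝ) ^ k)⁻¹) x)) u := fun u hu => by
    simp only [indicator_apply]
    rw [← Finset.sum_filter]
    simp only [volume_closeIncrements_div_pow hl1 hbl]
    rw [← Finset.mul_sum, mul_assoc]
    gcongr
    by_cases hu' : u ∈ H'
    · rw [if_pos hu']
      exact sum_volume_branchIncrements_le hl1 hbl hr (Finset.filter_subset _ _)
        fun a ha => hK _ (Finset.mem_filter.1 ha).2
    · rw [Finset.filter_false_of_mem fun a _ ha => hu' ?_]
      · exact zero_le
      · have := hH' _ ha
        rwa [mul_div_cancel₀ _ hbq.ne', Int.fract_add_natCast, Int.fract_eq_self.2 hu] at this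
  have hunfold := setLIntegral_Ico_zero_one_eq_sum_branches
    ((measurable_volume_closeIncrements (b := b) hl0.le hl1 (q + k) r).indicator hH)
    (pow_pos (by exact_mod_cast natCast_pos_of_one_lt_natCast_mul hbl : 0 < b) q)
  rw [Nat.cast_pow] at hunfold
  rw [pairMass, pairMass, hunfold, sq, ENNReal.ofReal_mul (by positivity), mul_assoc, mul_assoc]
  gcongr
  rw [← mul_assoc, ← lintegral_const_mul' _ _ (ENNReal.mul_ne_top ENNReal.ofReal_ne_top hKtop)]
  exact setLIntegral_mono' measurableSet_Ico hbranches

end BranchIncrements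

end Recursion

section Bootstrap

variable {b : ℕ} {l : ℝ}

/-- Off exceptional sets of exponentially small measure, the pairs of points at horizontal
distance comparable to `b ^ (-i)` and height distance at most `R * b ^ (-n)` have mass at most of
the order `b ^ (-n s)`, for all scales `i` at which such pairs matter. -/
def CorrelationBound (b : ℕ) (l s : ℝ) : Prop :=
  ∃ C > (0 : ℝ), ∃ c > (0 : ℝ), ∀ n i : ℕ, n ≤ i → i ≤ graphDim b l * n →
    ∃ H : Set ℝ, MeasurableSet H ∧
      volume (Ico (0 : ℝ) 1 \ H) ≤ ENNReal.ofReal (C * (b : ℝ) ^ (-(c * n))) ∧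
      pairMass b l i (heightConst b l * ((b : ℝ) ^ n)⁻¹) H ≤
        ENNReal.ofReal (C * (b : ℝ) ^ (-(n * s)))

/-- The points whose `b ^ q`-dilate lies in `H` modulo one and through which there are at most `K`
branches of order `q` with nearly the same slope. -/
def goodSet (b : ℕ) (l : ℝ) (q k : ℕ) (K : ENNReal) (H : Set ℝ) : Set ℝ :=
  {x | branchCount b l q (slopeTol b l k) x ≤ K ∧ Int.fract ((b : ℝ) ^ q * x) ∈ H}

lemma pairMass_le (i : ℕ) (r : ℝ) (H : Set ℝ) :
    pairMass b l i r H ≤ ENNReal.ofReal (2 * ((b : ℝ) ^ i)⁻¹) := by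
  have hvol (x : ℝ) : volume (closeIncrements b l i r x) ≤ ENNReal.ofReal (2 * ((b : ℝ) ^ i)⁻¹) :=
    (measure_mono fun t ht => abs_le.1 ht.1.2).trans_eq <|
      (Real.volume_Icc).trans (by congr 1; ring)
  refine (lintegral_mono fun x =>
    (indicator_le_self' (fun _ _ => zero_le) x).trans (hvol x)).trans_eq ?_
  rw [setLIntegral_const, Real.volume_Ico, sub_zero, ENNReal.ofReal_one, mul_one]

lemma correlationBound_one (hb : (1 : ℝ) ≤ b) : CorrelationBound b l 1 := by
  refine ⟨2, two_pos, 1, one_pos, fun n i hni _ => ⟨univ, .univ, by simp, ?_⟩⟩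
  refine (pairMass_le i _ _).trans (ENNReal.ofReal_le_ofReal ?_)
  rw [mul_one, rpow_neg (by positivity), rpow_natCast]
  gcongr

lemma CorrelationBound.mono (hb : (1 : ℝ) ≤ b) {s s' : ℝ} (h : s' ≤ s)
    (hs : CorrelationBound b l s) : CorrelationBound b l s' := by
  obtain ⟨C, hC, c, hc, hbound⟩ := hs
  refine ⟨C, hC, c, hc, fun n i hni hin => ?_⟩
  obtain ⟨H, hHm, hH, hmass⟩ := hbound n i hni hin
  refine ⟨H, hHm, hH, hmass.trans (ENNReal.ofReal_le_ofReal ?_)⟩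
  gcongr

/- `k` is the largest scale for which height distance `b ^ (-n)` is still of second order along the
branches of order `i - k`. -/
lemma exists_scale_split {D : ℝ} (hD1 : 1 < D) (hD2 : D < 2) {n i : ℕ} (hni : n ≤ i)
    (hin : i ≤ D * n) : ∃ q k : ℕ, i = q + k ∧ k ≤ q ∧ (2 - D) * q + 2 * k ≤ n ∧
      (D - 1) ^ 2 / D * n ≤ k + 1 ∧ n - (2 - D) * (q + k) ≤ D * (k + 1) := by
  have hD0 : 0 < D := by linarith
  have hni' : (n : ℝ) ≤ i := by exact_mod_cast hni
  set x : ℝ := (n - (2 - D) * i) / D with hx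
  have hxD : D * x = n - (2 - D) * i := mul_div_cancel₀ _ hD0.ne'
  have hrate : (D - 1) ^ 2 / D * n ≤ x := by
    rw [hx, div_mul_eq_mul_div, div_le_div_iff_of_pos_right hD0]
    nlinarith
  have hkx : (⌊x⌋₊ : ℝ) ≤ x := Nat.floor_le (le_trans (by positivity) hrate)
  have hxk : x < ⌊x⌋₊ + 1 := Nat.lt_floor_add_one x
  generalize ⌊x⌋₊ = k at hkx hxk
  have hDk : D * k ≤ D * x := by gcongr
  have hxk' : D * x ≤ D * (k + 1) := by gcongr
  have hki : 2 * k ≤ i := by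
    have : (2 * k : ℝ) ≤ i := by nlinarith
    exact_mod_cast this
  obtain ⟨q, rfl⟩ : ∃ q, i = q + k := ⟨i - k, by omega⟩
  push_cast at hxD
  exact ⟨q, k, rfl, by omega, by linarith, by linarith, by linarith⟩

lemma heightConst_mul_inv_pow_le (hl1 : l < 1) (hbl : 1 < b * l) {n q k : ℕ}
    (h : (2 - graphDim b l) * q + 2 * k ≤ n) :
    heightConst b l * ((b : ℝ) ^ n)⁻¹ ≤ heightConst b l * (l ^ q * ((b : ℝ) ^ k)⁻¹ ^ 2) := by
  have hb0 := natCast_pos_of_one_lt_natCast_mul hbl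
  refine mul_le_mul_of_nonneg_left ?_ (heightConst_pos hl1 hbl).le
  have hl : l ^ q = (b : ℝ) ^ ((graphDim b l - 2) * q) := by
    rw [rpow_mul_natCast hb0.le, natCast_rpow_graphDim_sub_two hl1 hbl]
  rw [hl, inv_pow, ← pow_mul, ← rpow_natCast, ← rpow_natCast, ← rpow_neg hb0.le, ← rpow_neg hb0.le,
    ← rpow_add hb0]
  refine rpow_le_rpow_of_exponent_le (one_lt_natCast_of_one_lt_natCast_mul hl1 hbl).le ?_
  push_cast
  linarith

lemma Transversal.exists_volume_lt_branchCount_le {δ : ℝ} (hl1 : l < 1) (hbl : 1 < b * l)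
    (hδ : 0 < δ) (htr : Transversal b l δ) :
    ∃ C > 0, ∀ (q k : ℕ) (ε : ℝ), k ≤ q → volume {x ∈ Ico (0 : ℝ) 1 |
        ENNReal.ofReal ((b : ℝ) ^ (q - k * (1 - ε))) < branchCount b l q (slopeTol b l k) x}
      ≤ ENNReal.ofReal (C * (b : ℝ) ^ (-(ε * k))) := by
  have hb0 := natCast_pos_of_one_lt_natCast_mul hbl
  have hT0 := slopeTol_pos hl1 hbl 0
  obtain ⟨C, hC, hco⟩ := htr.exists_coincidence_le hl1 hbl hδ
  refine ⟨C * slopeTol b l 0 + 1, by positivity, fun q k ε hkq => ?_⟩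
  set K := (b : ℝ) ^ (q - k * (1 - ε) : ℝ) with hK
  have hK0 : 0 < K := rpow_pos_of_pos hb0 _
  refine (volume_lt_branchCount_le q _ (by simpa using hK0) ENNReal.ofReal_ne_top).trans ?_
  refine (ENNReal.div_le_div_right (hco q _ (slopeTol_pos hl1 hbl k).le) _).trans ?_
  rw [← ENNReal.ofReal_div_of_pos hK0]
  refine ENNReal.ofReal_le_ofReal ?_
  have htol : (b : ℝ) ^ q * slopeTol b l k = slopeTol b l 0 * (b : ℝ) ^ (q - k : ℝ) := by
    rw [rpow_sub hb0, rpow_natCast, rpow_natCast, slopeTol, slopeTol]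
    ring
  have hone : 1 ≤ (b : ℝ) ^ (q - k : ℝ) :=
    one_le_rpow (one_lt_natCast_of_one_lt_natCast_mul hl1 hbl).le
      (sub_nonneg.2 (by exact_mod_cast hkq))
  rw [div_le_iff₀ hK0]
  calc C * b ^ q * slopeTol b l k + 1
      ≤ C * (slopeTol b l 0 * (b : ℝ) ^ (q - k : ℝ)) + (b : ℝ) ^ (q - k : ℝ) := by
        rw [mul_assoc, htol]
        gcongr
    _ = (C * slopeTol b l 0 + 1) * (b : ℝ) ^ (-(ε * k)) * K := by
        rw [mul_assoc _ ((b : ℝ) ^ _) K, hK, ← rpow_add hb0,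
          show -(ε * k) + (q - k * (1 - ε)) = (q - k : ℝ) by ring]
        ring

lemma measurableSet_goodSet {q k : ℕ} {K : ENNReal} {H : Set ℝ} (hH : MeasurableSet H) :
    MeasurableSet (goodSet b l q k K H) :=
  (measurableSet_le (measurable_branchCount q _) measurable_const).inter
    (hH.preimage (measurable_fract.comp (measurable_const_mul _)))

lemma volume_diff_goodSet_le {q k : ℕ} {K : ENNReal} {H : Set ℝ} (hb : 0 < b)
    (hH : MeasurableSet H) : volume (Ico (0 : ℝ) 1 \ goodSet b l q k K H)
      ≤ volume {x ∈ Ico (0 : ℝ) 1 | K < branchCount b l q (slopeTol b l k) x}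
        + volume (Ico (0 : ℝ) 1 \ H) := by
  rw [← volume_fract_natCast_mul_notMem hH (pow_pos hb q), Nat.cast_pow]
  refine le_trans (measure_mono ?_) (measure_union_le _ _)
  rintro x ⟨hx, hgood⟩
  rcases le_or_gt (branchCount b l q (slopeTol b l k) x) K with hle | hlt
  · exact Or.inr ⟨hx, fun hxH => hgood ⟨hle, hxH⟩⟩
  · exact Or.inl ⟨hx, hlt⟩

lemma pairMass_goodSet_le (hl1 : l < 1) (hbl : 1 < b * l) {n q k : ℕ}
    (hsplit : (2 - graphDim b l) * q + 2 * k ≤ n) {H : Set ℝ} (hH : MeasurableSet H) {C s ε : ℝ}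
    (hmass : pairMass b l k (heightConst b l * ((b : ℝ) ^ k)⁻¹) H
      ≤ ENNReal.ofReal (C * (b : ℝ) ^ (-(k * s)))) :
    pairMass b l (q + k) (heightConst b l * ((b : ℝ) ^ n)⁻¹)
        (goodSet b l q k (ENNReal.ofReal ((b : ℝ) ^ (q - k * (1 - ε)))) H)
      ≤ ENNReal.ofReal (C * (b : ℝ) ^ (-(q + k + k * (s - ε)))) := by
  have hb0 := natCast_pos_of_one_lt_natCast_mul hbl
  refine (pairMass_add_le hl1 hbl (heightConst_mul_inv_pow_le hl1 hbl hsplit)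
    (measurableSet_goodSet hH) ENNReal.ofReal_ne_top (fun x hx => hx.1) fun x hx => hx.2).trans ?_
  refine (mul_le_mul_right hmass _).trans_eq ?_
  rw [← ENNReal.ofReal_mul (by positivity), ← ENNReal.ofReal_mul (by positivity)]
  congr 1
  rw [mul_left_comm, inv_pow, ← pow_mul, ← rpow_natCast, ← rpow_neg hb0.le, ← rpow_add hb0,
    ← rpow_add hb0]
  congr 2
  push_cast
  ring

lemma mul_one_add_mul_le_of_scale_split {D σ n m k : ℝ} (hD : 1 < D) (hσ0 : 0 ≤ σ) (hσD : σ ≤ D)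
    (hnm : n ≤ m) (hk : n - (2 - D) * m ≤ D * (k + 1)) :
    n * (1 + (1 - D⁻¹) * σ) ≤ m + (k + 1) * σ := by
  have hD0 : 0 < D := by linarith
  obtain ⟨τ, rfl⟩ : ∃ τ, σ = D * τ := ⟨σ / D, (mul_div_cancel₀ _ hD0.ne').symm⟩
  have hτ0 : 0 ≤ τ := nonneg_of_mul_nonneg_right hσ0 hD0
  have hτ1 : τ ≤ 1 := le_of_mul_le_mul_left (by linarith) hD0
  have hgain : 0 ≤ (m - n) * (1 - (2 - D) * τ) := mul_nonneg (by linarith) (by nlinarith)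
  calc n * (1 + (1 - D⁻¹) * (D * τ))
      = m + (n - (2 - D) * m) * τ - (m - n) * (1 - (2 - D) * τ) := by field_simp; ring
    _ ≤ m + (n - (2 - D) * m) * τ := by linarith
    _ ≤ m + D * (k + 1) * τ := by gcongr
    _ = m + (k + 1) * (D * τ) := by ring

lemma rpow_neg_le_rpow_mul_rpow_neg {B x y z : ℝ} (hB : 1 ≤ B) (h : y ≤ x + z) :
    B ^ (-x) ≤ B ^ z * B ^ (-y) := by
  rw [← rpow_add (by linarith)]
  exact rpow_le_rpow_of_exponent_le hB (by linarith)

lemma CorrelationBound.step {δ s ε : ℝ} (hl1 : l < 1) (hbl : 1 < b * l) (hδ : 0 < δ)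
    (htr : Transversal b l δ) (hε0 : 0 < ε) (hεs : ε ≤ s) (hsD : s ≤ graphDim b l)
    (hs : CorrelationBound b l s) :
    CorrelationBound b l (1 + (1 - (graphDim b l)⁻¹) * (s - ε)) := by
  have hb0 := natCast_pos_of_one_lt_natCast_mul hbl
  have hb1 := (one_lt_natCast_of_one_lt_natCast_mul hl1 hbl).le
  have hD1 := one_lt_graphDim hl1 hbl
  obtain ⟨C, hC, c, hc, hbound⟩ := hs
  obtain ⟨C', hC', hcount⟩ := htr.exists_volume_lt_branchCount_le hl1 hbl hδ
  set D := graphDim b l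
  set γ := min ε c
  have hγ0 : 0 < γ := lt_min hε0 hc
  refine ⟨(C' + C) * b ^ γ + C * b ^ (s - ε), by positivity, γ * ((D - 1) ^ 2 / D),
    mul_pos hγ0 (div_pos (pow_pos (by linarith) 2) (by linarith)), fun n i hni hin => ?_⟩
  obtain ⟨q, k, rfl, hkq, hsplit, hrate, hDk⟩ :=
    exists_scale_split hD1 (graphDim_lt_two hl1 hbl) hni hin
  obtain ⟨H, hHm, hH, hmass⟩ := hbound k k le_rfl (le_mul_of_one_le_left k.cast_nonneg hD1.le)
  refine ⟨goodSet b l q k (ENNReal.ofReal ((b : ℝ) ^ (q - k * (1 - ε)))) H,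
    measurableSet_goodSet hHm, (volume_diff_goodSet_le (by exact_mod_cast hb0) hHm).trans ?_,
    (pairMass_goodSet_le hl1 hbl hsplit hHm hmass).trans (ENNReal.ofReal_le_ofReal ?_)⟩
  · refine (add_le_add (hcount q k ε hkq) hH).trans ?_
    rw [← ENNReal.ofReal_add (by positivity) (by positivity)]
    refine ENNReal.ofReal_le_ofReal ?_
    calc C' * (b : ℝ) ^ (-(ε * k)) + C * (b : ℝ) ^ (-(c * k))
        ≤ C' * (b : ℝ) ^ (-(γ * k)) + C * (b : ℝ) ^ (-(γ * k)) := by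
          gcongr
          exacts [min_le_left _ _, min_le_right _ _]
      _ ≤ (C' + C) * (b ^ γ * (b : ℝ) ^ (-(γ * ((D - 1) ^ 2 / D) * n))) := by
          rw [← add_mul]
          gcongr
          exact rpow_neg_le_rpow_mul_rpow_neg hb1
            (by linarith [mul_le_mul_of_nonneg_left hrate hγ0.le])
      _ ≤ ((C' + C) * b ^ γ + C * b ^ (s - ε)) * (b : ℝ) ^ (-(γ * ((D - 1) ^ 2 / D) * n)) := by
          rw [← mul_assoc]
          gcongr
          exact le_add_of_nonneg_right (by positivity)
  · have hexp : n * (1 + (1 - D⁻¹) * (s - ε)) ≤ q + k + (k + 1) * (s - ε) :=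
      mul_one_add_mul_le_of_scale_split hD1 (sub_nonneg.2 hεs) (by linarith)
        (by exact_mod_cast hni) hDk
    calc C * (b : ℝ) ^ (-(q + k + k * (s - ε)))
        ≤ C * (b ^ (s - ε) * (b : ℝ) ^ (-(n * (1 + (1 - D⁻¹) * (s - ε))))) := by
          gcongr
          exact rpow_neg_le_rpow_mul_rpow_neg hb1 (by linarith)
      _ ≤ ((C' + C) * b ^ γ + C * b ^ (s - ε)) *
            (b : ℝ) ^ (-(n * (1 + (1 - D⁻¹) * (s - ε)))) := by
          rw [← mul_assoc]
          gcongr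
          exact le_add_of_nonneg_left (by positivity)

lemma Transversal.correlationBound_iterate {δ ε : ℝ} (hl1 : l < 1) (hbl : 1 < b * l) (hδ : 0 < δ)
    (htr : Transversal b l δ) (hε0 : 0 < ε) (hε1 : ε < 1) (j : ℕ) :
    CorrelationBound b l
      (1 + (graphDim b l - 1) * (1 - ε) * (1 - (1 - (graphDim b l)⁻¹) ^ j)) := by
  have hD1 := one_lt_graphDim hl1 hbl
  have hτ0 : 0 ≤ 1 - (graphDim b l)⁻¹ := sub_nonneg.2 (inv_le_one_of_one_le₀ hD1.le)
  have hτ1 : 1 - (graphDim b l)⁻¹ ≤ 1 := sub_le_self _ (by positivity)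
  induction j with
  | zero => simpa using correlationBound_one (one_lt_natCast_of_one_lt_natCast_mul hl1 hbl).le
  | succ j ih =>
    have hp0 := pow_nonneg hτ0 j
    have hp1 := pow_le_one₀ (n := j) hτ0 hτ1
    have hgain : 0 ≤ (graphDim b l - 1) * (1 - ε) := mul_nonneg (by linarith) (by linarith)
    have hgain0 := mul_nonneg hgain (sub_nonneg.2 hp1)
    convert ih.step hl1 hbl hδ htr hε0 (by linarith) (by nlinarith) using 1
    rw [pow_succ]
    field_simp
    ring

lemma Transversal.correlationBound_of_lt {δ s : ℝ} (hl1 : l < 1) (hbl : 1 < b * l) (hδ : 0 < δ)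
    (htr : Transversal b l δ) (hs : s < graphDim b l) : CorrelationBound b l s := by
  have hD1 := one_lt_graphDim hl1 hbl
  have hlim : Tendsto (fun j : ℕ => 1 + (graphDim b l - 1) * (1 - (1 / 2 : ℝ) ^ (j + 1)) *
      (1 - (1 - (graphDim b l)⁻¹) ^ j)) atTop
        (nhds (1 + (graphDim b l - 1) * (1 - 0) * (1 - 0))) := by
    refine (((tendsto_const_nhds.sub ?_).const_mul _).mul (tendsto_const_nhds.sub ?_)).const_add 1
    · exact (tendsto_add_atTop_iff_nat 1).2
        (tendsto_pow_atTop_nhds_zero_of_lt_one (by norm_num) (by norm_num))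
    · exact tendsto_pow_atTop_nhds_zero_of_lt_one
        (sub_nonneg.2 (inv_le_one_of_one_le₀ hD1.le)) (sub_lt_self _ (by positivity))
  obtain ⟨j, hj⟩ := (hlim.eventually_const_lt (u := s) (by linarith)).exists
  exact (htr.correlationBound_iterate hl1 hbl hδ (by positivity)
    (pow_lt_one₀ (by norm_num) (by norm_num) j.succ_ne_zero) j).mono
    (one_lt_natCast_of_one_lt_natCast_mul hl1 hbl).le hj.le

end Bootstrap

section LowerBound

variable {b : ℕ} {l : ℝ}

lemma one_le_heightConst (hl0 : 0 ≤ l) (hl1 : l < 1) (hbl : 1 < b * l) : 1 ≤ heightConst b l := by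
  have hl : 1 ≤ (1 - l)⁻¹ := (one_le_inv₀ (by linarith)).2 (by linarith)
  have : 0 < (b * l - 1 : ℝ)⁻¹ := inv_pos.2 (by linarith)
  have hrest : 0 ≤ ((2 * π) ^ 2 + 4 * π) * (b * l - 1)⁻¹ := by positivity
  rw [heightConst]
  linarith

lemma volume_increments_le (hl1 : l < 1) (hbl : 1 < b * l) (n M : ℕ) (x : ℝ) :
    volume {t | |t| ≤ ((b : ℝ) ^ n)⁻¹ ∧ |Wc b l (x + t) - Wc b l x| ≤ ((b : ℝ) ^ n)⁻¹} ≤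
      ∑ i ∈ Finset.Icc n M, volume (closeIncrements b l i (heightConst b l * ((b : ℝ) ^ n)⁻¹) x)
        + ENNReal.ofReal (2 * ((b : ℝ) ^ (M + 1))⁻¹) := by
  have hl0 := (pos_of_one_lt_natCast_mul hbl).le
  have hcover : {t | |t| ≤ ((b : ℝ) ^ n)⁻¹ ∧ |Wc b l (x + t) - Wc b l x| ≤ ((b : ℝ) ^ n)⁻¹} ⊆
      (⋃ i ∈ Finset.Icc n M, closeIncrements b l i (heightConst b l * ((b : ℝ) ^ n)⁻¹) x) ∪
        Icc (-((b : ℝ) ^ (M + 1))⁻¹) ((b : ℝ) ^ (M + 1))⁻¹ := by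
    rintro t ⟨ht, hWt⟩
    rcases le_or_gt |t| ((b : ℝ) ^ (M + 1))⁻¹ with hsmall | hlarge
    · exact Or.inr (abs_le.1 hsmall)
    have hb1 := one_lt_natCast_of_one_lt_natCast_mul hl1 hbl
    have ht0 : 0 < |t| := lt_of_le_of_lt (by positivity) hlarge
    obtain ⟨i, hni, hit, hti⟩ := exists_inv_pow_succ_lt_and_le_inv_pow hb1 ht0 ht
    have hiM : i < M + 1 := (pow_lt_pow_iff_right₀ hb1).1
      ((inv_lt_inv₀ (by positivity) (by positivity)).1 (hlarge.trans_le hti))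
    refine Or.inl (mem_biUnion (Finset.mem_coe.2 (Finset.mem_Icc.2 ⟨hni, by omega⟩)) ?_)
    exact ⟨⟨hit, hti⟩, hWt.trans (le_mul_of_one_le_left (by positivity)
      (one_le_heightConst hl0 hl1 hbl))⟩
  refine (measure_mono hcover).trans ((measure_union_le _ _).trans (add_le_add
    (measure_biUnion_finset_le _ _) ?_))
  rw [Real.volume_Icc, sub_neg_eq_add, two_mul]

lemma card_Icc_floor_mul_le {D : ℝ} (hD : D ≤ 2) (n : ℕ) :
    ((Finset.Icc n ⌊D * n⌋₊).card : ℝ) ≤ n + 1 := by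
  have hfloor : ⌊D * n⌋₊ ≤ 2 * n := Nat.floor_le_of_le (by push_cast; gcongr)
  rw [Nat.card_Icc]
  exact_mod_cast (by omega : ⌊D * n⌋₊ + 1 - n ≤ n + 1)

lemma volume_increments_le_of_forall_le (hl1 : l < 1) (hbl : 1 < b * l) {d : ℝ}
    (hd : d ≤ graphDim b l) {n : ℕ} {x : ℝ}
    (h : ∀ i : ℕ, n ≤ i → i ≤ graphDim b l * n →
      volume (closeIncrements b l i (heightConst b l * ((b : ℝ) ^ n)⁻¹) x) ≤
        ENNReal.ofReal ((b : ℝ) ^ (-(n * d)) / (n + 1))) :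
    volume {t | |t| ≤ ((b : ℝ) ^ n)⁻¹ ∧ |Wc b l (x + t) - Wc b l x| ≤ ((b : ℝ) ^ n)⁻¹} ≤
      ENNReal.ofReal (3 * (b : ℝ) ^ (-(n * d))) := by
  have hb0 := natCast_pos_of_one_lt_natCast_mul hbl
  have hD1 := one_lt_graphDim hl1 hbl
  set M := ⌊graphDim b l * n⌋₊
  have hM : (M : ℝ) ≤ graphDim b l * n := Nat.floor_le (by positivity)
  have hcard := card_Icc_floor_mul_le (graphDim_lt_two hl1 hbl).le n
  refine (volume_increments_le hl1 hbl n M x).trans ?_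
  have hsum := Finset.sum_le_card_nsmul (Finset.Icc n M) _ _ fun i hi =>
    h i (Finset.mem_Icc.1 hi).1 (hM.trans' (by exact_mod_cast (Finset.mem_Icc.1 hi).2))
  refine (add_le_add_left hsum _).trans ?_
  rw [← ENNReal.ofReal_nsmul, ← ENNReal.ofReal_add (by positivity) (by positivity), nsmul_eq_mul]
  refine ENNReal.ofReal_le_ofReal ?_
  have htail : ((b : ℝ) ^ (M + 1))⁻¹ ≤ (b : ℝ) ^ (-(n * d)) := by
    rw [← rpow_natCast, ← rpow_neg hb0.le]
    refine rpow_le_rpow_of_exponent_le (one_lt_natCast_of_one_lt_natCast_mul hl1 hbl).le ?_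
    have hfloor := Nat.lt_floor_add_one (graphDim b l * n)
    push_cast
    linarith [mul_le_mul_of_nonneg_right hd n.cast_nonneg]
  have hmain : (Finset.Icc n M).card * ((b : ℝ) ^ (-(n * d)) / (n + 1)) ≤ (b : ℝ) ^ (-(n * d)) :=
    (mul_le_mul_of_nonneg_right hcard (by positivity)).trans_eq (mul_div_cancel₀ _ (by positivity))
  linarith

lemma volume_lt_volume_closeIncrements_le (hl0 : 0 ≤ l) (hl1 : l < 1) {i : ℕ} {r : ℝ} {H : Set ℝ}
    (hH : MeasurableSet H) {u : ENNReal} (hu0 : u ≠ 0) (hu : u ≠ ⊤) :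
    volume {x ∈ Ico (0 : ℝ) 1 | u < volume (closeIncrements b l i r x)} ≤
      volume (Ico (0 : ℝ) 1 \ H) + pairMass b l i r H / u := by
  have hm := (measurable_volume_closeIncrements (b := b) hl0 hl1 i r).indicator hH
  refine le_trans (measure_mono ?_) ((measure_union_le (Ico (0 : ℝ) 1 \ H) _).trans
    (add_le_add_right ((Measure.le_restrict_apply _ _).trans
      (meas_ge_le_lintegral_div hm.aemeasurable hu0 hu)) _))
  rintro x ⟨hx, hux⟩
  by_cases hxH : x ∈ H
  · refine Or.inr ⟨?_, hx⟩
    rw [mem_ofPred_eq, indicator_of_mem hxH]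
    exact hux.le
  · exact Or.inl ⟨hx, hxH⟩

lemma CorrelationBound.exists_volume_lt_volume_closeIncrements_le {d s : ℝ} (hl1 : l < 1)
    (hbl : 1 < b * l) (hs : CorrelationBound b l s) (hds : d < s) :
    ∃ C : ℝ, ∃ η > (0 : ℝ), ∀ n i : ℕ, n ≤ i → i ≤ graphDim b l * n →
      volume {x ∈ Ico (0 : ℝ) 1 | ENNReal.ofReal ((b : ℝ) ^ (-(n * d)) / (n + 1)) <
          volume (closeIncrements b l i (heightConst b l * ((b : ℝ) ^ n)⁻¹) x)} ≤
        ENNReal.ofReal ((n + 1) * (C * (b : ℝ) ^ (-(η * n)))) := by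
  have hb0 := natCast_pos_of_one_lt_natCast_mul hbl
  have hb1 := (one_lt_natCast_of_one_lt_natCast_mul hl1 hbl).le
  obtain ⟨C, hC, c, hc, hbound⟩ := hs
  refine ⟨2 * C, min c (s - d), lt_min hc (sub_pos.2 hds), fun n i hni hin => ?_⟩
  obtain ⟨H, hHm, hH, hmass⟩ := hbound n i hni hin
  have hu : 0 < (b : ℝ) ^ (-(n * d)) / (n + 1) := by positivity
  refine (volume_lt_volume_closeIncrements_le (pos_of_one_lt_natCast_mul hbl).le hl1 hHm
    (by simpa using hu) ENNReal.ofReal_ne_top).trans ?_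
  refine (add_le_add hH (ENNReal.div_le_div_right hmass _)).trans ?_
  rw [← ENNReal.ofReal_div_of_pos hu, ← ENNReal.ofReal_add (by positivity) (by positivity)]
  refine ENNReal.ofReal_le_ofReal ?_
  have hquot : C * (b : ℝ) ^ (-(n * s)) / ((b : ℝ) ^ (-(n * d)) / (n + 1)) =
      (n + 1) * (C * (b : ℝ) ^ (-((s - d) * n))) := by
    rw [show -((s - d) * n) = -(n * s) - -(n * d) by ring, rpow_sub hb0]
    field_simp
  calc C * (b : ℝ) ^ (-(c * n)) + C * (b : ℝ) ^ (-(n * s)) / ((b : ℝ) ^ (-(n * d)) / (n + 1))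
      ≤ (n + 1) * (C * (b : ℝ) ^ (-(c * n))) + (n + 1) * (C * (b : ℝ) ^ (-((s - d) * n))) := by
        rw [hquot]
        refine add_le_add_left ?_ _
        exact le_mul_of_one_le_left (by positivity) (le_add_of_nonneg_left n.cast_nonneg)
    _ ≤ (n + 1) * (C * (b : ℝ) ^ (-(min c (s - d) * n))) +
          (n + 1) * (C * (b : ℝ) ^ (-(min c (s - d) * n))) := by
        gcongr
        exacts [min_le_left _ _, min_le_right _ _]
    _ = (n + 1) * (2 * C * (b : ℝ) ^ (-(min c (s - d) * n))) := by ring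

lemma CorrelationBound.exists_volume_lt_volume_increments_le {d s : ℝ} (hl1 : l < 1)
    (hbl : 1 < b * l) (hs : CorrelationBound b l s) (hds : d < s) (hd : d ≤ graphDim b l) :
    ∃ C : ℝ, ∃ η > (0 : ℝ), ∀ n : ℕ,
      volume {x ∈ Ico (0 : ℝ) 1 | ENNReal.ofReal (3 * (b : ℝ) ^ (-(n * d))) < volume
        {t | |t| ≤ ((b : ℝ) ^ n)⁻¹ ∧ |Wc b l (x + t) - Wc b l x| ≤ ((b : ℝ) ^ n)⁻¹}} ≤
      ENNReal.ofReal ((n + 1) * ((n + 1) * (C * (b : ℝ) ^ (-(η * n))))) := by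
  have hD1 := one_lt_graphDim hl1 hbl
  obtain ⟨C, η, hη, hscale⟩ := hs.exists_volume_lt_volume_closeIncrements_le hl1 hbl hds
  refine ⟨C, η, hη, fun n => ?_⟩
  set large : ℕ → Set ℝ := fun i => {x ∈ Ico (0 : ℝ) 1 |
    ENNReal.ofReal ((b : ℝ) ^ (-(n * d)) / (n + 1)) <
      volume (closeIncrements b l i (heightConst b l * ((b : ℝ) ^ n)⁻¹) x)}
  have hcover : {x ∈ Ico (0 : ℝ) 1 | ENNReal.ofReal (3 * (b : ℝ) ^ (-(n * d))) < volume
      {t | |t| ≤ ((b : ℝ) ^ n)⁻¹ ∧ |Wc b l (x + t) - Wc b l x| ≤ ((b : ℝ) ^ n)⁻¹}} ⊆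
        ⋃ i ∈ Finset.Icc n ⌊graphDim b l * n⌋₊, large i := by
    rintro x ⟨hx, hlt⟩
    contrapose! hlt
    refine volume_increments_le_of_forall_le hl1 hbl hd fun i hni hin => ?_
    by_contra! hi
    exact hlt (mem_biUnion (Finset.mem_coe.2 (Finset.mem_Icc.2 ⟨hni, Nat.le_floor hin⟩)) ⟨hx, hi⟩)
  refine (measure_mono hcover).trans ((measure_biUnion_finset_le _ _).trans ?_)
  have hsum := Finset.sum_le_card_nsmul (Finset.Icc n ⌊graphDim b l * n⌋₊) _ _ fun i hi =>
    hscale n i (Finset.mem_Icc.1 hi).1 <| (Nat.floor_le (by positivity)).trans' <|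
      by exact_mod_cast (Finset.mem_Icc.1 hi).2
  refine hsum.trans ?_
  rw [nsmul_eq_mul, ← ENNReal.ofReal_natCast,
    ENNReal.ofReal_mul (p := (n : ℝ) + 1) (q := (n + 1) * _) (by positivity)]
  exact mul_le_mul_left (ENNReal.ofReal_le_ofReal
    (card_Icc_floor_mul_le (graphDim_lt_two hl1 hbl).le n)) _

lemma tsum_ofReal_succ_sq_mul_geometric_ne_top (C : ℝ) {ρ : ℝ} (hρ0 : 0 ≤ ρ) (hρ1 : ρ < 1) :
    ∑' n : ℕ, ENNReal.ofReal ((n + 1) * ((n + 1) * (C * ρ ^ n))) ≠ ⊤ := by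
  have hρ : ‖ρ‖ < 1 := by rwa [Real.norm_of_nonneg hρ0]
  have hsum (k : ℕ) := summable_pow_mul_geometric_of_norm_lt_one k hρ
  refine Summable.tsum_ofReal_ne_top
    ((((hsum 2).add ((hsum 1).mul_left 2)).add (hsum 0)).mul_left C |>.congr fun n => ?_)
  ring

lemma CorrelationBound.le_dimH {d : NNReal} {s : ℝ} (hl1 : l < 1) (hbl : 1 < b * l)
    (hs : CorrelationBound b l s) (hds : d < s) (hd : d ≤ graphDim b l) :
    d ≤ dimH ((fun x => (x, Wc b l x)) '' Ico 0 1) := by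
  have hb1 := one_lt_natCast_of_one_lt_natCast_mul hl1 hbl
  obtain ⟨C, η, hη, hbad⟩ := hs.exists_volume_lt_volume_increments_le hl1 hbl hds hd
  have hsummable : ∑' n : ℕ, volume {x ∈ Ico (0 : ℝ) 1 |
      ENNReal.ofReal (3 * (b : ℝ) ^ (-(n * d : ℝ))) < volume
        {t | |t| ≤ ((b : ℝ) ^ n)⁻¹ ∧ |Wc b l (x + t) - Wc b l x| ≤ ((b : ℝ) ^ n)⁻¹}} ≠ ⊤ := by
    refine ne_top_of_le_ne_top (tsum_ofReal_succ_sq_mul_geometric_ne_top C (by positivity)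
      (rpow_lt_one_of_one_lt_of_neg hb1 (neg_lt_zero.2 hη))) (ENNReal.tsum_le_tsum fun n => ?_)
    rw [← rpow_mul_natCast (by positivity), neg_mul]
    exact hbad n
  obtain ⟨N, hN⟩ := exists_measure_forall_ge_notMem_ne_zero (S := Ico (0 : ℝ) 1) (by simp) hsummable
  refine le_dimH_graph (continuous_Wc (pos_of_one_lt_natCast_mul hbl).le hl1).measurable hb1
    three_pos (N := N) hN (fun x hx => hx.1) fun x hx n hn => ?_
  by_contra! hlt
  exact hx.2 n hn ⟨hx.1, hlt⟩

theorem Transversal.dimH_graph_Wc {δ : ℝ} (hl1 : l < 1) (hbl : 1 < b * l) (hδ : 0 < δ)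
    (htr : Transversal b l δ) :
    dimH ((fun x => (x, Wc b l x)) '' Ico 0 1) = ENNReal.ofReal (graphDim b l) := by
  refine (dimH_graph_Wc_le hl1 hbl).antisymm (le_of_forall_lt fun d hd => ?_)
  lift d to NNReal using hd.ne_top
  obtain ⟨d', hdd', hd'⟩ := ENNReal.lt_iff_exists_nnreal_btwn.1 hd
  have hd'D : (d' : ℝ) < graphDim b l := by
    rwa [← ENNReal.ofReal_coe_nnreal, ENNReal.ofReal_lt_ofReal_iff (by
      linarith [one_lt_graphDim hl1 hbl])] at hd'
  obtain ⟨s, hds, hsD⟩ := exists_between hd'D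
  exact hdd'.trans_le ((htr.correlationBound_of_lt hl1 hbl hδ hsD).le_dimH hl1 hbl hds hd'D.le)

end LowerBound

section Transversality

variable {b : ℕ} {l : ℝ}

lemma slopeDiff_eq (q : ℕ) (a : ℤ) (z : ℝ) :
    slopeDiff b l q a z = 2 * ∑ j ∈ Finset.range q, (b * l : ℝ)⁻¹ ^ (j + 1) *
      (sin (π * a / b ^ (j + 1)) * cos (π * (2 * z + a) / b ^ (j + 1))) := by
  rw [slopeDiff, branchSlope, branchSlope, ← Finset.sum_sub_distrib, Finset.mul_sum]
  refine Finset.sum_congr rfl fun j _ => ?_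
  rw [← mul_sub, sin_sub_sin]
  ring_nf

lemma slopeDiffDeriv_eq (q : ℕ) (a : ℤ) (z : ℝ) :
    slopeDiffDeriv b l q a z = -(4 * π) * ∑ j ∈ Finset.range q, (b * (b * l) : ℝ)⁻¹ ^ (j + 1) *
      (sin (π * a / b ^ (j + 1)) * sin (π * (2 * z + a) / b ^ (j + 1))) := by
  rw [slopeDiffDeriv, branchSlopeDeriv, branchSlopeDeriv, ← Finset.sum_sub_distrib, Finset.mul_sum]
  refine Finset.sum_congr rfl fun j _ => ?_
  rw [← mul_sub, ← mul_sub, cos_sub_cos, mul_inv, mul_pow, inv_pow (b : ℝ)]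
  ring_nf

lemma two_div_le_abs_sin (hb : 0 < b) {a : ℤ} (ha : ¬ (b : ℤ) ∣ a) :
    2 / (b : ℝ) ≤ |sin (π * a / b)| := by
  have hb0 : (0 : ℝ) < b := by exact_mod_cast hb
  obtain ⟨m, hm⟩ : ∃ m : ℤ, |(a / b : ℝ) - m| ≤ 1 / 2 := ⟨_, abs_sub_round _⟩
  have hshift : |sin (π * a / b)| = |sin (π * (a / b - m))| := by
    rw [mul_sub, ← mul_div_assoc, mul_comm π (m : ℝ), sin_sub_int_mul_pi, abs_mul, abs_zpow,
      abs_neg, abs_one, one_zpow, one_mul]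
  have hhalf : |π * (a / b - m)| ≤ π / 2 := by
    rw [abs_mul, abs_of_pos pi_pos, div_eq_mul_one_div π]
    exact mul_le_mul_of_nonneg_left hm pi_pos.le
  have hne : 1 / (b : ℝ) ≤ |(a / b : ℝ) - m| := by
    have hint : (1 : ℝ) ≤ |(a : ℝ) - b * m| := by
      exact_mod_cast Int.one_le_abs (sub_ne_zero.2 fun h => ha (Dvd.intro m h.symm))
    rw [div_le_iff₀ hb0, ← abs_of_pos hb0, ← abs_mul, abs_of_pos hb0, sub_mul,
      div_mul_cancel₀ _ hb0.ne', mul_comm (m : ℝ)]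
    exact hint
  calc 2 / (b : ℝ) = 2 / π * (π * (1 / b)) := by field_simp
    _ ≤ 2 / π * |π * (a / b - m)| := by
      rw [abs_mul, abs_of_pos pi_pos]
      gcongr
    _ ≤ |sin (π * a / b)| := hshift ▸ mul_abs_le_abs_sin hhalf

lemma abs_sin_pi_mul_div_four_le {a : ℤ} (ha : ¬ 2 ∣ a) : |sin (π * a / 4)| ≤ 0.7072 := by
  obtain ⟨k, rfl⟩ := Int.not_even_iff_odd.1 (even_iff_two_dvd.not.2 ha)
  have hcos : cos (2 * (π * (2 * k + 1 : ℤ) / 4)) = 0 :=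
    cos_eq_zero_iff.2 ⟨k, by push_cast; ring⟩
  rw [cos_two_mul'] at hcos
  refine abs_le_of_sq_le_sq ?_ (by norm_num)
  linarith [sin_sq_add_cos_sq (π * (2 * k + 1 : ℤ) / 4)]

lemma abs_zero_le_of_abs_le_one {x : ℝ} (hx : 1 < x) {d : ℕ → ℝ} (hd : ∀ j, |d j| ≤ 1) (q : ℕ) :
    |d 0| ≤ x * |∑ j ∈ Finset.range (q + 1), x⁻¹ ^ (j + 1) * d j| +
      x⁻¹ * (|d 1| + (x - 1)⁻¹) := by
  have hx0 : 0 < x := by linarith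
  have htail : |∑ j ∈ Finset.range q, x⁻¹ ^ (j + 1) * d (j + 1)| ≤ x⁻¹ * (|d 1| + (x - 1)⁻¹) := by
    have : 0 < x - 1 := by linarith
    cases q with
    | zero =>
      simp only [Finset.range_zero, Finset.sum_empty, abs_zero]
      positivity
    | succ q =>
      have hrest := abs_sum_range_inv_pow_succ_mul_le hx zero_le_one (fun j => hd (j + 2)) q
      rw [one_mul] at hrest
      have hsplit : ∑ j ∈ Finset.range (q + 1), x⁻¹ ^ (j + 1) * d (j + 1) =
          x⁻¹ * (d 1 + ∑ j ∈ Finset.range q, x⁻¹ ^ (j + 1) * d (j + 2)) := by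
        rw [Finset.sum_range_succ', mul_add, Finset.mul_sum, zero_add, pow_one, add_comm]
        exact congrArg _ (Finset.sum_congr rfl fun j _ => by ring)
      rw [hsplit, abs_mul, abs_of_pos (inv_pos.2 hx0)]
      gcongr
      exact (abs_add_le _ _).trans (by gcongr)
  have hfirst : d 0 = x * ∑ j ∈ Finset.range (q + 1), x⁻¹ ^ (j + 1) * d j -
      ∑ j ∈ Finset.range q, x⁻¹ ^ (j + 1) * d (j + 1) := by
    rw [Finset.sum_range_succ', mul_add, Finset.mul_sum, zero_add, pow_one,
      mul_inv_cancel_left₀ hx0.ne', add_sub_right_comm, ← Finset.sum_sub_distrib]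
    simp [pow_succ' x⁻¹ (_ + 1), mul_assoc, mul_inv_cancel_left₀ hx0.ne']
  calc |d 0| ≤ |x * ∑ j ∈ Finset.range (q + 1), x⁻¹ ^ (j + 1) * d j| +
        |∑ j ∈ Finset.range q, x⁻¹ ^ (j + 1) * d (j + 1)| := by
        rw [hfirst]
        exact abs_sub _ _
    _ ≤ _ := by
        rw [abs_mul, abs_of_pos hx0]
        gcongr

/- The case `b = 2` is tight: it needs the value `1 / √2` of the second sine. -/
lemma inv_mul_add_inv_le (hb : 2 ≤ b) (hl : 0.99 < l) {c : ℝ} (hc : c ≤ 1)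
    (hc2 : b = 2 → c ≤ 0.7072) :
    (b * l)⁻¹ * (c + (b * l - 1)⁻¹) ≤ 0.9 * (2 / b) ∧
      (b * (b * l))⁻¹ * (c + (b * (b * l) - 1)⁻¹) ≤ 0.3 * (2 / b) := by
  have hb0 : (0 : ℝ) < b := by positivity
  have : 0 < l := by linarith
  have hinv (x m : ℝ) (hm : 0 < m) (hx : m + 1 ≤ x) : (x - 1)⁻¹ ≤ m⁻¹ :=
    inv_anti₀ hm (by linarith)
  rw [inv_mul_le_iff₀ (by positivity), inv_mul_le_iff₀ (by positivity),
    show b * l * (0.9 * (2 / b)) = 1.8 * l by field_simp; norm_num,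
    show b * (b * l) * (0.3 * (2 / b)) = 0.6 * (b * l) by field_simp; norm_num]
  rcases hb.eq_or_lt with rfl | hb3
  · have hc' := hc2 rfl
    have h1 := hinv (2 * l) 0.98 (by norm_num) (by linarith)
    have h2 := hinv (2 * (2 * l)) 2.96 (by norm_num) (by linarith)
    norm_num at h1 h2 ⊢
    constructor <;> linarith
  · have hb3' : (3 : ℝ) ≤ b := by exact_mod_cast hb3
    have hbl : 2.97 ≤ b * l := by nlinarith
    have h1 := hinv (b * l) 1.97 (by norm_num) (by linarith)
    have h2 := hinv (b * (b * l)) 7.91 (by norm_num) (by nlinarith)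
    norm_num at h1 h2 ⊢
    constructor <;> linarith

lemma abs_mul_le_of_abs_le_one (x : ℝ) {y : ℝ} (hy : |y| ≤ 1) : |x * y| ≤ |x| :=
  (abs_mul x y).trans_le (mul_le_of_le_one_right (abs_nonneg x) hy)

lemma abs_sin_mul_cos_le (hbl : 1 < b * l) (q : ℕ) (a : ℤ) (z : ℝ) :
    |sin (π * a / b) * cos (π * (2 * z + a) / b)| ≤ b * l * |slopeDiff b l (q + 1) a z| +
      (b * l : ℝ)⁻¹ * (|sin (π * a / b ^ 2)| + (b * l - 1)⁻¹) := by
  have hhead := abs_zero_le_of_abs_le_one hbl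
    (d := fun j => sin (π * a / b ^ (j + 1)) * cos (π * (2 * z + a) / b ^ (j + 1)))
    (fun j => (abs_mul_le_of_abs_le_one _ (abs_cos_le_one _)).trans (abs_sin_le_one _)) q
  rw [zero_add, pow_one] at hhead
  refine hhead.trans ?_
  rw [slopeDiff_eq, abs_mul 2, abs_two]
  gcongr _ * ?_ + _ * (?_ + _)
  · exact le_mul_of_one_le_left (abs_nonneg _) one_le_two
  · exact abs_mul_le_of_abs_le_one _ (abs_cos_le_one _)

lemma abs_sin_mul_sin_le (hbl : 1 < b * (b * l)) (q : ℕ) (a : ℤ) (z : ℝ) :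
    |sin (π * a / b) * sin (π * (2 * z + a) / b)| ≤
      b * (b * l) * |slopeDiffDeriv b l (q + 1) a z| +
        (b * (b * l) : ℝ)⁻¹ * (|sin (π * a / b ^ 2)| + (b * (b * l) - 1)⁻¹) := by
  have hhead := abs_zero_le_of_abs_le_one hbl
    (d := fun j => sin (π * a / b ^ (j + 1)) * sin (π * (2 * z + a) / b ^ (j + 1)))
    (fun j => (abs_mul_le_of_abs_le_one _ (abs_sin_le_one _)).trans (abs_sin_le_one _)) q
  rw [zero_add, pow_one] at hhead
  refine hhead.trans ?_
  rw [slopeDiffDeriv_eq, abs_mul (-_), abs_neg, abs_of_pos (by positivity : 0 < 4 * π)]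
  gcongr _ * ?_ + _ * (?_ + _)
  · exact le_mul_of_one_le_left (abs_nonneg _) (by linarith [pi_gt_three])
  · exact abs_mul_le_of_abs_le_one _ (abs_sin_le_one _)

lemma abs_sin_lt_of_abs_mul_le {x y r : ℝ} (hr : 0 < r) (hcos : |sin x * cos y| ≤ 0.92 * r)
    (hsin : |sin x * sin y| ≤ 0.32 * r) : |sin x| < r := by
  refine abs_lt_of_sq_lt_sq ?_ hr.le
  calc sin x ^ 2 = (sin x * cos y) ^ 2 + (sin x * sin y) ^ 2 := by
        rw [mul_pow, mul_pow, ← mul_add, cos_sq_add_sin_sq, mul_one]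
    _ ≤ (0.92 * r) ^ 2 + (0.32 * r) ^ 2 :=
        add_le_add (sq_le_sq.2 (hcos.trans (le_abs_self _)))
          (sq_le_sq.2 (hsin.trans (le_abs_self _)))
    _ < r ^ 2 := by nlinarith [pow_pos hr 2]

lemma exists_transversal (hb : 2 ≤ b) (hl : 0.99 < l) : ∃ δ > 0, Transversal b l δ := by
  have hb2 : (2 : ℝ) ≤ b := by exact_mod_cast hb
  have hbl : 1 < b * l := by nlinarith
  have hbbl : b * l ≤ b * (b * l) := le_mul_of_one_le_left (by linarith) (by linarith)
  have hbbl0 : 0 < b * (b * l) := by linarith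
  refine ⟨0.02 * (2 / b) / (b * (b * l)), by positivity, fun q a z ha => ?_⟩
  by_contra! hsmall
  obtain ⟨hslope, hderiv⟩ := hsmall
  rw [lt_div_iff₀' hbbl0] at hslope hderiv
  obtain ⟨htail, htail'⟩ := inv_mul_add_inv_le hb hl (abs_sin_le_one (π * a / b ^ 2)) fun htwo => by
    subst htwo
    exact (by norm_num : (2 : ℝ) ^ 2 = 4) ▸ abs_sin_pi_mul_div_four_le ha
  refine (two_div_le_abs_sin (by linarith) ha).not_gt
    (abs_sin_lt_of_abs_mul_le (y := π * (2 * z + a) / b) (by positivity) ?_ ?_)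
  · linarith [abs_sin_mul_cos_le hbl q a z,
      mul_le_mul_of_nonneg_right hbbl (abs_nonneg (slopeDiff b l (q + 1) a z))]
  · linarith [abs_sin_mul_sin_le (hbl.trans_le hbbl) q a z]

end Transversality

theorem stmt1_general {b : ℕ} {l : ℝ} (hb : 2 ≤ b) (hl : 0.99 < l) (hl1 : l < 1) :
    dimH ((fun x => (x, Wc b l x)) '' Set.Ico (0 : ℝ) 1) =
      ENNReal.ofReal (2 + Real.log l / Real.log b) := by
  have hb2 : (2 : ℝ) ≤ b := by exact_mod_cast hb
  obtain ⟨δ, hδ, htr⟩ := exists_transversal hb hl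
  exact htr.dimH_graph_Wc hl1 (by nlinarith) hδ

/-- For each integer `b ≥ 2` there exists `λ_b < 1` such that for every `λ ∈ (λ_b, 1)` the graph
of the classical Weierstrass function `W_{λ,b}` has Hausdorff dimension `2 + log λ / log b`. -/
theorem stmt1 (b : ℕ) (hb : 2 ≤ b) :
    ∃ lb : ℝ, lb < 1 ∧ ∀ l : ℝ, lb < l → l < 1 →
      dimH ((fun x => (x, Wc b l x)) '' Set.Ico (0 : ℝ) 1)
        = ENNReal.ofReal (2 + Real.log l / Real.log b) := by
  exact ⟨0.99, by norm_num, fun _ hl hl1 => stmt1_general hb hl hl1⟩
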